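/- arXiv:2205.00866 — 4 statements merged into one kernel-verified Lean document; each statement's English description precedes it below -/
import Mathlib

section
/- Let n ≥ 1 and let L_S(n) be the 4n×4n real symmetric matrix with diagonal entries 4 at positions j ≡ 0 or 1 (mod 4) and 2 at positions j ≡ 2 or 3 (mod 4), entries −1 on the sub- and super-diagonal, corner entries (L_S)_{1,4n} = (L_S)_{4n,1} = +1, and all other entries 0. Let μ = 15 + 4√14 and ν = 15 − 4√14. Then L_S(n) is positive definite (all its eigenvalues β_1, …, β_{4n} are positive) and the sum of the reciprocals of its eigenvalues satisfies ∑_{j=1}^{4n} 1/β_j = (9n√14/14) · (μ^n − ν^n)/(μ^n + ν^n + 2). -/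
/-!
The sum of the reciprocal eigenvalues is the trace of the inverse (`sum_inv_eigenvalues`), and the
inverse is an explicit Green function. Viewed on sequences changing sign after `4 n` steps, `LS n`
is a second-difference operator with 4-periodic diagonal (`LS_row`). Its homogeneous equation has
two Floquet solutions `sol a` and `sol b`, with multipliers `nu` and `mu` over a period
(`sol_quasi`). Summing the Green function of the whole line over antiperiodic images gives the
inverse (`LS_green`), whose diagonal entries are
`sol a * sol b / (b - a) * (1 - nu ^ n) / (1 + nu ^ n)`. Here `sol a * sol b` is 4-periodic, so the
trace is `n` times the contribution of a single period (`sol_mul_sum`).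

Positive definiteness holds because the quadratic form is a sum of squares (`LS_quad_nonneg`) and
the matrix is invertible.
-/

noncomputable def mu : ℝ := 15 + 4 * Real.sqrt 14
noncomputable def nu : ℝ := 15 - 4 * Real.sqrt 14

/-- The matrix `L_S(n)`: 4n×4n, diagonal entries 4 at (1-indexed) positions ≡ 0,1 (mod 4)
and 2 at positions ≡ 2,3 (mod 4), −1 on the sub/super-diagonal, +1 in the corners. -/
def LS (n : ℕ) : Matrix (Fin (4 * n)) (Fin (4 * n)) ℝ :=
  Matrix.of fun i j =>
    if i.val = j.val then
      (if (i.val + 1) % 4 = 0 ∨ (i.val + 1) % 4 = 1 then 4 else 2)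
    else if i.val + 1 = j.val ∨ j.val + 1 = i.val then -1
    else if (i.val = 0 ∧ j.val = 4 * n - 1) ∨ (j.val = 0 ∧ i.val = 4 * n - 1) then 1
    else 0

/-- The diagonal of `LS n`, indexed from 1. -/
def dg (m : ℕ) : ℝ := if m % 4 = 0 ∨ m % 4 = 1 then 4 else 2

/-- `LS n` acts as the second-difference operator `y ↦ d y - y(· - 1) - y(· + 1)` on sequences that
change sign after `4 n` steps: the corner entries `+1` are the off-diagonal `-1`s carried across the
boundary. Row `i` corresponds to position `i + 1` of the sequence. -/
lemma LS_row (n : ℕ) (hn : 1 ≤ n) (y : ℕ → ℝ) (h0 : y 0 = -y (4 * n))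
    (h1 : y (4 * n + 1) = -y 1) (i : Fin (4 * n)) :
    ∑ k, LS n i k * y (k + 1) = dg (i + 1) * y (i + 1) - y i - y (i + 2) := by
  obtain ⟨i, hi⟩ := i
  -- The nonzero entries of the row: diagonal, right, left, and the two corners. For `i = 0` the
  -- index `i - 1` is junk, so its value is replaced by `0`.
  let f : ℕ → ℝ := fun k => (if k = i then dg (i + 1) * y (i + 1) else 0)
    + (if k = i + 1 then (if i = 4 * n - 1 then 0 else -y (i + 2)) else 0)
    + (if k = i - 1 then (if i = 0 then 0 else -y i) else 0)
    + (if k = 4 * n - 1 then (if i = 0 then y (4 * n) else 0) else 0)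
    + (if k = 0 then (if i = 4 * n - 1 then y 1 else 0) else 0)
  have key (k : Fin (4 * n)) : LS n ⟨i, hi⟩ k * y (k + 1) = f k := by
    obtain ⟨k, hk⟩ := k
    simp only [LS, Matrix.of_apply, dg, f]
    grind
  rw [Finset.sum_congr rfl fun k _ => key k, Fin.sum_univ_eq_sum_range]
  simp only [f, Finset.sum_add_distrib, Finset.sum_ite_eq', Finset.mem_range]
  grind

/-- The solution of the homogeneous recurrence `y (m + 2) = d (m + 1) * y (m + 1) - y m` with
initial values `1, s`. -/
def sol (s : ℝ) : ℕ → ℝ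
  | 0 => 1
  | 1 => s
  | m + 2 => dg (m + 1) * sol s (m + 1) - sol s m

/-- The quadratic singles out the two initial values giving Floquet solutions, which are multiplied
by `10 s - 3` (that is, by `mu` or `nu`) over one period of the diagonal. -/
lemma sol_quasi {s : ℝ} (hs : 5 * s ^ 2 - 18 * s + 5 = 0) (m : ℕ) :
    sol s (m + 4) = (10 * s - 3) * sol s m := by
  induction m using Nat.twoStepInduction with
  | zero => norm_num [sol, dg]; ring
  | one => norm_num [sol, dg]; linear_combination (-2) * hs
  | more m h1 h2 =>
    have hd : dg (m + 5) = dg (m + 1) := by simp only [dg]; grind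
    have e1 : sol s (m + 2 + 4) = dg (m + 5) * sol s (m + 5) - sol s (m + 4) := rfl
    have e2 : sol s (m + 2) = dg (m + 1) * sol s (m + 1) - sol s m := rfl
    rw [e1, e2, hd, h1, show m + 5 = m + 1 + 4 by ring, h2]; ring

lemma sol_add_mul {s : ℝ} (hs : 5 * s ^ 2 - 18 * s + 5 = 0) (n r : ℕ) :
    sol s (4 * n + r) = (10 * s - 3) ^ n * sol s r := by
  induction n with
  | zero => simp
  | succ n ih =>
    rw [show 4 * (n + 1) + r = 4 * n + r + 4 by ring, sol_quasi hs, ih]; ring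

/-- The Wronskian of two solutions is constant. -/
lemma sol_wronskian (a b : ℝ) (m : ℕ) :
    sol b (m + 1) * sol a m - sol b m * sol a (m + 1) = b - a := by
  induction m with
  | zero => simp [sol]
  | succ m ih => rw [← ih]; simp only [sol]; ring

/-- The multipliers of the two Floquet solutions are inverse to each other, so the product of the
solutions is 4-periodic, with sum `36 / 5` over a period. -/
lemma sol_mul_sum {a b : ℝ} (ha : 5 * a ^ 2 - 18 * a + 5 = 0)
    (hb : 5 * b ^ 2 - 18 * b + 5 = 0) (hab : a * b = 1) (hs : a + b = 18 / 5) (n : ℕ) :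
    ∑ i ∈ Finset.range (4 * n), sol a (i + 1) * sol b (i + 1) = 36 / 5 * n := by
  have hl : (10 * a - 3) * (10 * b - 3) = 1 := by linear_combination 100 * hab - 30 * hs
  induction n with
  | zero => simp
  | succ n ih =>
    have e (r : ℕ) : sol a (4 * n + r) * sol b (4 * n + r) = sol a r * sol b r := by
      rw [sol_add_mul ha, sol_add_mul hb, mul_mul_mul_comm, ← mul_pow, hl, one_pow, one_mul]
    rw [show 4 * (n + 1) = 4 * n + 1 + 1 + 1 + 1 by ring]
    simp only [Finset.sum_range_succ, ih]
    simp only [add_assoc (4 * n), e]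
    norm_num [sol, dg]
    linear_combination 166 * hab - 48 * hs

/-- The unnormalised Green function of `LS n`, with positions counted from 1: column `j`, as a
function of the position `m`. It is the alternating sum of the whole-line Green function
`sol b (min m j) * sol a (max m j)` over the translates of `j` by multiples of `4 n`. -/
def green (n : ℕ) (a b : ℝ) (j m : ℕ) : ℝ :=
  if m ≤ j then sol b m * sol a j - (10 * a - 3) ^ n * (sol a m * sol b j)
  else sol a m * sol b j - (10 * a - 3) ^ n * (sol b m * sol a j)

/-- Off the diagonal the Green function solves the homogeneous recurrence; at the diagonal its two
branches differ in slope by a multiple of the Wronskian. -/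
lemma LS_green {n : ℕ} (hn : 1 ≤ n) {a b : ℝ} (ha : 5 * a ^ 2 - 18 * a + 5 = 0)
    (hb : 5 * b ^ 2 - 18 * b + 5 = 0) (hab : a * b = 1) (hs : a + b = 18 / 5)
    (i j : Fin (4 * n)) :
    ∑ k : Fin (4 * n), LS n i k * green n a b (j + 1) (k + 1) =
      if i = j then (b - a) * (1 + (10 * a - 3) ^ n) else 0 := by
  have hl : (10 * a - 3) ^ n * (10 * b - 3) ^ n = 1 := by
    rw [← mul_pow, show (10 * a - 3) * (10 * b - 3) = 1 by linear_combination 100 * hab - 30 * hs,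
      one_pow]
  obtain ⟨i, hi⟩ := i
  obtain ⟨j, hj⟩ := j
  have ra (m : ℕ) : sol a (m + 2) = dg (m + 1) * sol a (m + 1) - sol a m := rfl
  have rb (m : ℕ) : sol b (m + 2) = dg (m + 1) * sol b (m + 1) - sol b m := rfl
  rw [LS_row n hn]
  · simp only [green, Fin.mk.injEq]
    rcases lt_trichotomy i j with h | rfl | h
    · rw [if_pos (by omega), if_pos (by omega), if_pos (by omega), if_neg (by omega), ra, rb]
      ring
    · rw [if_pos (by omega), if_pos (by omega), if_neg (by omega), if_pos rfl, ra, rb,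
        ← sol_wronskian a b i]
      ring
    · rw [if_neg (show ¬i + 1 ≤ j + 1 by omega), if_neg (show ¬i + 2 ≤ j + 1 by omega),
        if_neg (show ¬i = j by omega), ra, rb]
      split_ifs with h'
      -- Just right of the diagonal, position `i` is the diagonal one, where both branches agree.
      · obtain rfl : i = j + 1 := by omega
        ring
      · ring
  -- The two antiperiodicity conditions required by `LS_row`.
  · have ea := sol_add_mul ha n 0
    have eb := sol_add_mul hb n 0
    simp only [add_zero] at ea eb
    simp only [green]
    split_ifs
    · rw [show j + 1 = 4 * n by omega, ea, eb]
      linear_combination (-sol b 0 * sol a 0 * (10 * a - 3) ^ n) * hl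
    · rw [ea, eb]; linear_combination (-sol b 0 * sol a (j + 1)) * hl
    all_goals omega
  · simp only [green]
    rw [if_neg (by omega), if_pos (by omega), sol_add_mul ha, sol_add_mul hb]
    linear_combination (-sol b 1 * sol a (j + 1)) * hl

lemma LS_isHermitian (n : ℕ) : (LS n).IsHermitian := by
  ext i j
  simp only [Matrix.conjTranspose_apply, star_trivial, LS, Matrix.of_apply]
  grind

/-- The quadratic form is `∑ (d - 2) y ^ 2` plus the sum of the squared differences of the
antiperiodic extension `y` of `x`. -/
lemma LS_quad_nonneg {n : ℕ} (hn : 1 ≤ n) (x : Fin (4 * n) → ℝ) :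
    0 ≤ ∑ i, x i * ∑ k, LS n i k * x k := by
  let y : ℕ → ℝ := fun m =>
    if m = 0 then -x ⟨4 * n - 1, by omega⟩ else
      if h : m - 1 < 4 * n then x ⟨m - 1, h⟩ else -x ⟨0, by omega⟩
  have hy (k : Fin (4 * n)) : x k = y (k + 1) := by simp [y]
  have h0 : y 0 = -y (4 * n) := by grind
  have h1 : y (4 * n + 1) = -y 1 := by grind
  simp only [hy, LS_row n hn y h0 h1]
  rw [Fin.sum_univ_eq_sum_range
    (fun i => y (i + 1) * (dg (i + 1) * y (i + 1) - y i - y (i + 2)))]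
  -- The summand differs from the sum-of-squares one by half of this telescoping sum, which
  -- vanishes because squares of an antiperiodic sequence are periodic.
  have t0 := Finset.sum_range_sub (fun i => y i ^ 2 - y (i + 1) ^ 2) (4 * n)
  have tz : ∑ i ∈ Finset.range (4 * n),
      ((y (i + 1) ^ 2 - y (i + 1 + 1) ^ 2) - (y i ^ 2 - y (i + 1) ^ 2)) = 0 := by
    rw [t0, h0, h1]; simp
  calc (0 : ℝ) ≤ ∑ i ∈ Finset.range (4 * n), ((dg (i + 1) - 2) * y (i + 1) ^ 2
        + (y (i + 1) - y i) ^ 2 / 2 + (y (i + 2) - y (i + 1)) ^ 2 / 2) := by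
        refine Finset.sum_nonneg fun i _ => ?_
        have : 0 ≤ dg (i + 1) - 2 := by simp only [dg]; split_ifs <;> norm_num
        positivity
    _ = ∑ i ∈ Finset.range (4 * n), y (i + 1) * (dg (i + 1) * y (i + 1) - y i - y (i + 2)) := by
        rw [← add_zero (∑ i ∈ Finset.range (4 * n), y (i + 1) * _), ← zero_div (2 : ℝ), ← neg_zero,
          ← tz, ← Finset.sum_neg_distrib, Finset.sum_div, ← Finset.sum_add_distrib]
        refine Finset.sum_congr rfl fun i _ => ?_
        ring

lemma sum_inv_eigenvalues {ι : Type*} [Fintype ι] [DecidableEq ι] {A G : Matrix ι ι ℝ}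
    (hA : A.IsHermitian) (h : A * G = 1) : ∑ j, (hA.eigenvalues j)⁻¹ = G.trace := by
  obtain ⟨U, hU⟩ : ∃ U : Matrix ι ι ℝ, U = hA.eigenvectorUnitary := ⟨_, rfl⟩
  have h1 : star U * U = 1 := by rw [hU]; exact Unitary.coe_star_mul_self _
  have h2 : U * star U = 1 := by rw [hU]; exact Unitary.coe_mul_star_self _
  have hD : star U * A * U = Matrix.diagonal hA.eigenvalues := by
    have := hA.conjStarAlgAut_star_eigenvectorUnitary
    rw [Unitary.conjStarAlgAut_star_apply, ← hU] at this
    exact this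
  have hDG : Matrix.diagonal hA.eigenvalues * (star U * G * U) = 1 := by
    rw [← hD]
    calc star U * A * U * (star U * G * U) = star U * (A * (U * star U) * G) * U := by
          simp only [mul_assoc]
      _ = 1 := by rw [h2, mul_one, h, mul_one, h1]
  have htr : G.trace = (star U * G * U).trace := by
    rw [Matrix.trace_mul_comm, ← mul_assoc, h2, one_mul]
  rw [htr, Matrix.trace]
  refine Finset.sum_congr rfl fun j _ => ?_
  have := congrFun (congrFun hDG j) j
  rw [Matrix.diagonal_mul, Matrix.one_apply_eq] at this
  exact inv_eq_of_mul_eq_one_right this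

theorem stmt_8 (n : ℕ) (hn : 1 ≤ n) :
    (LS n).PosDef ∧
      ∀ hH : (LS n).IsHermitian,
        ∑ j : Fin (4 * n), (hH.eigenvalues j)⁻¹
          = (9 * n * Real.sqrt 14 / 14) * (mu ^ n - nu ^ n) / (mu ^ n + nu ^ n + 2) := by
  have h14 : Real.sqrt 14 ^ 2 = 14 := Real.sq_sqrt (by norm_num)
  have hpos : 0 < Real.sqrt 14 := Real.sqrt_pos.2 (by norm_num)
  -- The roots of `5 s ^ 2 - 18 s + 5`; the multipliers `10 s - 3` are then `nu` and `mu`.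
  obtain ⟨a, ha⟩ : ∃ a : ℝ, a = (9 - 2 * Real.sqrt 14) / 5 := ⟨_, rfl⟩
  obtain ⟨b, hb⟩ : ∃ b : ℝ, b = (9 + 2 * Real.sqrt 14) / 5 := ⟨_, rfl⟩
  have hab : a * b = 1 := by rw [ha, hb]; linear_combination (-4 / 25) * h14
  have hs : a + b = 18 / 5 := by rw [ha, hb]; ring
  have ra : 5 * a ^ 2 - 18 * a + 5 = 0 := by linear_combination 5 * a * hs - 5 * hab
  have rb : 5 * b ^ 2 - 18 * b + 5 = 0 := by linear_combination 5 * b * hs - 5 * hab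
  have hba : b - a = 4 * Real.sqrt 14 / 5 := by rw [ha, hb]; ring
  have hnu : 10 * a - 3 = nu := by rw [ha, nu]; ring
  have hmn : mu * nu = 1 := by rw [mu, nu]; linear_combination (-16) * h14
  have hmu0 : 0 < mu := by rw [mu]; positivity
  have hnu0 : 0 < nu := pos_of_mul_pos_right (hmn ▸ one_pos) hmu0.le
  have hmun : 0 < mu ^ n := pow_pos hmu0 n
  have hnun : 0 < nu ^ n := pow_pos hnu0 n
  have hmnn : mu ^ n * nu ^ n = 1 := by rw [← mul_pow, hmn, one_pow]
  obtain ⟨c, hc⟩ : ∃ c : ℝ, c = (b - a) * (1 + nu ^ n) := ⟨_, rfl⟩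
  have hc0 : c ≠ 0 := by rw [hc, hba]; positivity
  let G : Matrix (Fin (4 * n)) (Fin (4 * n)) ℝ :=
    Matrix.of fun k j => c⁻¹ * green n a b (j + 1) (k + 1)
  have hG : LS n * G = 1 := by
    ext i j
    simp only [Matrix.mul_apply, G, Matrix.of_apply, mul_left_comm _ c⁻¹]
    rw [← Finset.mul_sum, LS_green hn ra rb hab hs, hnu, ← hc, Matrix.one_apply]
    split_ifs
    · exact inv_mul_cancel₀ hc0
    · exact mul_zero _
  refine ⟨?_, fun hH => ?_⟩
  · have hpsd : (LS n).PosSemidef :=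
      .of_dotProduct_mulVec_nonneg (LS_isHermitian n) fun x => LS_quad_nonneg hn x
    exact hpsd.posDef_iff_isUnit.2 (IsUnit.of_mul_eq_one _ hG)
  · rw [sum_inv_eigenvalues hH hG]
    let f : ℕ → ℝ := fun k => c⁻¹ * (1 - nu ^ n) * (sol a (k + 1) * sol b (k + 1))
    have hdiag (i : Fin (4 * n)) : G i i = f i := by
      simp only [G, f, Matrix.of_apply, green, le_refl, if_true, hnu]
      ring
    rw [Matrix.trace, Finset.sum_congr rfl fun i _ => (G.diag_apply i).trans (hdiag i), Fin.sum_univ_eq_sum_range,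
      ← Finset.mul_sum, sol_mul_sum ra rb hab hs, hc, hba]
    have h1 : 1 + nu ^ n ≠ 0 := by positivity
    have h2 : mu ^ n + nu ^ n + 2 ≠ 0 := by positivity
    have key : (1 - nu ^ n) / (1 + nu ^ n) = (mu ^ n - nu ^ n) / (mu ^ n + nu ^ n + 2) := by
      rw [div_eq_div_iff h1 h2]
      linear_combination (-2) * hmnn
    have h3 : (4 * Real.sqrt 14 / 5)⁻¹ * (36 / 5) = 9 * Real.sqrt 14 / 14 := by
      field_simp
      linear_combination (-36) * h14
    rw [mul_inv]
    linear_combination (4 * Real.sqrt 14 / 5)⁻¹ * (36 / 5) * n * key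
      + n * (mu ^ n - nu ^ n) / (mu ^ n + nu ^ n + 2) * h3
end

section
/- Let n ≥ 1 and let Q_n(8,4) be the Möbius octagonal-quadrilateral network: the simple graph on the 8n vertices u_1,…,u_{4n}, v_1,…,v_{4n} whose edges are u_i u_{i+1} and v_i v_{i+1} for 1 ≤ i ≤ 4n−1, u_i v_i for every i ≡ 0 or 1 (mod 4), and the two twisted edges u_1 v_{4n} and v_1 u_{4n}. Let 0 = μ_1 < μ_2 ≤ ⋯ ≤ μ_{8n} be the eigenvalues of the Laplacian matrix of Q_n(8,4), and set μ = 15 + 4√14, ν = 15 − 4√14. Then the Kirchhoff index Kf(Q_n(8,4)) = 8n · ∑_{k=2}^{8n} 1/μ_k satisfies Kf(Q_n(8,4)) = (32n³ − 2n)/3 + (36n²√14/7) · (μ^n − ν^n)/(μ^n + ν^n + 2). -/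
/-- Underlying relation of the Möbius octagonal-quadrilateral network `Q_n(8,4)`:
`Sum.inl i` is the vertex `u_{i+1}`, `Sum.inr i` is the vertex `v_{i+1}`. -/
def mobiusRel (n : ℕ) : (Fin (4 * n) ⊕ Fin (4 * n)) → (Fin (4 * n) ⊕ Fin (4 * n)) → Prop
  | Sum.inl i, Sum.inl j => i.val + 1 = j.val
  | Sum.inr i, Sum.inr j => i.val + 1 = j.val
  | Sum.inl i, Sum.inr j =>
      (i = j ∧ ((i.val + 1) % 4 = 0 ∨ (i.val + 1) % 4 = 1)) ∨
      (i.val = 0 ∧ j.val = 4 * n - 1) ∨ (i.val = 4 * n - 1 ∧ j.val = 0)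
  | Sum.inr _, Sum.inl _ => False

instance (n : ℕ) : DecidableRel (mobiusRel n) := fun a b => by
  rcases a with i | i <;> rcases b with j | j <;> simp only [mobiusRel] <;> infer_instance

/-- The Möbius octagonal-quadrilateral network `Q_n(8,4)`. -/
def mobius (n : ℕ) : SimpleGraph (Fin (4 * n) ⊕ Fin (4 * n)) :=
  SimpleGraph.fromRel (mobiusRel n)

instance (n : ℕ) : DecidableRel (mobius n).Adj := fun a b =>
  decidable_of_iff (a ≠ b ∧ (mobiusRel n a b ∨ mobiusRel n b a)) Iff.rfl

open Matrix Polynomial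

/-! ### The rescaled Chebyshev polynomials `C_n`, with `C_n(a + a⁻¹) = aⁿ + a⁻ⁿ` -/

theorem chebC_add_two (n : ℕ) : Chebyshev.C ℝ ((n + 2 : ℕ) : ℤ)
    = X * Chebyshev.C ℝ ((n + 1 : ℕ) : ℤ) - Chebyshev.C ℝ (n : ℤ) := by
  push_cast
  exact Chebyshev.C_add_two ℝ n

theorem chebC_eval {a b : ℝ} (hab : a * b = 1) (n : ℕ) :
    (Chebyshev.C ℝ n).eval (a + b) = a ^ n + b ^ n ∧
    (Chebyshev.C ℝ (n + 1 : ℕ)).eval (a + b) = a ^ (n + 1) + b ^ (n + 1) := by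
  induction n with
  | zero => simp; norm_num
  | succ n ih =>
    refine ⟨ih.2, ?_⟩
    rw [chebC_add_two, eval_sub, eval_mul, eval_X, ih.1, ih.2]
    linear_combination (a ^ n + b ^ n) * hab

/-- `C_n'(a + a⁻¹) = n (aⁿ - a⁻ⁿ) / (a - a⁻¹)`, proved together with its successor so that the
two-step recurrence applies. -/
theorem chebC_deriv {a b : ℝ} (hab : a * b = 1) (n : ℕ) :
    (a - b) * (derivative (Chebyshev.C ℝ n)).eval (a + b) = n * (a ^ n - b ^ n) ∧
    (a - b) * (derivative (Chebyshev.C ℝ (n + 1 : ℕ))).eval (a + b)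
      = (n + 1) * (a ^ (n + 1) - b ^ (n + 1)) := by
  induction n with
  | zero => simp
  | succ n ih =>
    refine ⟨by exact_mod_cast ih.2, ?_⟩
    have h := (chebC_eval hab n).2
    obtain ⟨ih1, ih2⟩ := ih
    rw [chebC_add_two]
    simp only [derivative_sub, derivative_mul, derivative_X, one_mul, eval_sub, eval_mul, eval_X,
      eval_add, h]
    push_cast at ih2 ⊢
    linear_combination (a + b) * ih2 - ih1 + n * (a ^ n - b ^ n) * hab

/-- The first two derivatives of `C_n` at the point `2`, where the formula of `chebC_deriv`
degenerates to `0 = 0`. -/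
theorem chebC_two (n : ℕ) :
    ((derivative (Chebyshev.C ℝ n)).eval 2 = n ^ 2 ∧
     (derivative (derivative (Chebyshev.C ℝ n))).eval 2 = n ^ 2 * (n ^ 2 - 1) / 6) ∧
    ((derivative (Chebyshev.C ℝ (n + 1 : ℕ))).eval 2 = (n + 1) ^ 2 ∧
     (derivative (derivative (Chebyshev.C ℝ (n + 1 : ℕ)))).eval 2
      = (n + 1) ^ 2 * ((n + 1) ^ 2 - 1) / 6) := by
  induction n with
  | zero => simp
  | succ n ih =>
    obtain ⟨⟨h1, h2⟩, h3, h4⟩ := ih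
    refine ⟨⟨by exact_mod_cast h3, by exact_mod_cast h4⟩, ?_⟩
    have h : (Chebyshev.C ℝ ((n + 1 : ℕ) : ℤ)).eval 2 = 2 := Chebyshev.C_eval_two _ _
    rw [chebC_add_two]
    simp only [derivative_sub, derivative_mul, derivative_X, one_mul, eval_sub, eval_mul, eval_X,
      eval_add, derivative_add, h, h1, h2, h3, h4]
    push_cast
    constructor <;> ring

/-! ### The twisted shift -/

/-- The `ε`-twisted cyclic shift `Z`: ones on the superdiagonal and `ε` in the bottom left corner.
The two entries are added, so that for `n = 1` the matrix is `(ε)`, as it should be. -/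
def twShift (ε : ℝ) (n : ℕ) : Matrix (Fin n) (Fin n) ℝ := Matrix.of fun i j =>
  (if i.val + 1 = j.val then 1 else 0) + (if i.val + 1 = n ∧ j.val = 0 then ε else 0)

theorem twShift_apply (ε : ℝ) (n : ℕ) (i j : Fin n) : twShift ε n i j =
    (if i.val + 1 = j.val then 1 else 0) + (if i.val + 1 = n ∧ j.val = 0 then ε else 0) := rfl

/-- The characteristic polynomial of `Z` is `aᵐ⁺¹ - ε`: the vector `(1, a, a², …)` is mapped by
`a - Z` to a multiple of the last basis vector, so replacing the first column by that image leaves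
a single entry to expand along, with a triangular complement. -/
theorem twShift_charpoly_eval (ε a : ℝ) (m : ℕ) :
    (scalar (Fin (m + 1)) a - twShift ε (m + 1)).det = a ^ (m + 1) - ε := by
  have h := det_updateCol_sum (scalar (Fin (m + 1)) a - twShift ε (m + 1)) 0 (fun i => a ^ i.val)
  have hcol : (fun k : Fin (m + 1) => ∑ i : Fin (m + 1), (a ^ i.val) •
      (scalar (Fin (m + 1)) a - twShift ε (m + 1)) k i)
      = fun k => if k = Fin.last m then a ^ (m + 1) - ε else 0 := by
    funext k
    simp only [scalar_apply, Matrix.sub_apply, diagonal_apply, twShift_apply, smul_eq_mul, mul_sub,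
      Finset.sum_sub_distrib, mul_ite, mul_zero, mul_add, mul_one, Finset.sum_add_distrib,
      Finset.sum_ite_eq, Finset.mem_univ, if_true]
    have e2 : ∑ i : Fin (m + 1), (if k.val + 1 = m + 1 ∧ i.val = 0 then a ^ i.val * ε else 0)
        = if k = Fin.last m then ε else 0 := by
      rw [Finset.sum_eq_single 0]
      · simp [Fin.ext_iff]
      · intro b _ hb
        rw [if_neg]
        rintro ⟨_, h⟩
        exact hb (Fin.ext h)
      · simp
    rw [e2]
    refine Fin.lastCases ?_ (fun k => ?_) k
    · rw [Finset.sum_eq_zero]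
      · simp; ring
      · intro i _
        rw [if_neg]
        have := i.2
        simp only [Fin.val_last]
        omega
    · rw [Finset.sum_eq_single k.succ]
      · simp [Fin.ext_iff, k.2.ne]; ring
      · intro b _ hb
        rw [if_neg]
        intro h
        exact hb (Fin.ext (by simpa using h.symm))
      · simp
  rw [hcol] at h
  simp only [Fin.val_zero, pow_zero, one_smul] at h
  rw [← h, det_succ_column_zero, Finset.sum_eq_single (Fin.last m)]
  · simp only [updateCol_self, if_true, Fin.succAbove_last]
    rw [det_of_isLowerTriangular]
    · rw [Finset.prod_congr rfl (g := fun _ => (-1 : ℝ))]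
      · rw [Finset.prod_const, Finset.card_univ, Fintype.card_fin, Fin.val_last]
        have : ((-1 : ℝ) ^ m) * (-1) ^ m = 1 := by rw [← mul_pow]; simp
        linear_combination (a ^ (m + 1) - ε) * this
      · intro i _
        have : i.castSucc ≠ i.succ := by simp [Fin.ext_iff]
        simp [updateCol_ne, twShift_apply, this]
    · intro i j hij
      have hij : i < j := hij
      rw [Fin.lt_def] at hij
      have h1 : i.castSucc ≠ j.succ := by
        intro h; have := congrArg Fin.val h; simp at this; omega
      have h2 : ¬ (i.val = j.val) := by omega
      simp [updateCol_ne, twShift_apply, h1, h2]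
  · intro b _ hb
    simp [hb]
  · simp


/-- For `ε = ±1` the twisted shift is orthogonal. -/
theorem twShift_mul_transpose {ε : ℝ} (hε : ε ^ 2 = 1) (n : ℕ) :
    twShift ε n * (twShift ε n)ᵀ = 1 := by
  rcases n with _ | m
  · exact Subsingleton.elim _ _
  -- Each row has exactly one nonzero entry, in the column of the cyclic successor.
  have key : ∀ i j : Fin (m + 1), twShift ε (m + 1) i j
      = if j = (if h : i.val + 1 < m + 1 then ⟨i.val + 1, h⟩ else 0) then
        (if i.val + 1 < m + 1 then 1 else ε) else 0 := by
    intro i j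
    have := i.2
    by_cases h : i.val + 1 < m + 1
    · have h' : ¬ (i.val = m) := by omega
      simp only [twShift_apply, Fin.ext_iff, dif_pos h, if_pos h]
      grind
    · have h' : i.val = m := by omega
      have h2 : ¬ (m + 1 = j.val) := by have := j.2; omega
      simp only [twShift_apply, Fin.ext_iff, dif_neg h, if_neg h, Fin.val_zero]
      grind
  ext i k
  have := i.2
  have := k.2
  simp only [mul_apply, transpose_apply, key, ite_mul, mul_ite, zero_mul, mul_zero,
    Finset.sum_ite_eq', Finset.mem_univ, if_true, one_apply]
  by_cases hi : i.val + 1 < m + 1 <;> by_cases hk : k.val + 1 < m + 1 <;>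
    simp only [dif_pos, dif_neg, if_pos, if_neg, hi, hk, Fin.ext_iff, Fin.val_zero,
      not_false_eq_true] <;> grind

theorem twShift_pow {ε : ℝ} (m : ℕ) :
    twShift ε (m + 1) ^ (m + 1) = scalar (Fin (m + 1)) ε := by
  have hc : (twShift ε (m + 1)).charpoly = X ^ (m + 1) - C ε := by
    refine Polynomial.funext fun a => ?_
    rw [eval_charpoly, twShift_charpoly_eval]
    simp
  have h := aeval_self_charpoly (twShift ε (m + 1))
  rw [hc] at h
  simpa [sub_eq_zero, algebraMap_eq_diagonal, Pi.algebraMap_def] using h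

/-- `Z⁻¹ = Zᵀ` is a polynomial in `Z`, because `Zᵐ⁺¹ = ε`. -/
theorem twShift_transpose {ε : ℝ} (hε : ε ^ 2 = 1) (m : ℕ) :
    ε • twShift ε (m + 1) ^ m = (twShift ε (m + 1))ᵀ := by
  have h1 := twShift_mul_transpose hε (m + 1)
  have h2 := twShift_pow (ε := ε) m
  calc ε • twShift ε (m + 1) ^ m
      = ε • (twShift ε (m + 1) ^ m * (twShift ε (m + 1) * (twShift ε (m + 1))ᵀ)) := by
        rw [h1, mul_one]
    _ = ε • (twShift ε (m + 1) ^ (m + 1) * (twShift ε (m + 1))ᵀ) := by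
        rw [← mul_assoc, ← pow_succ]
    _ = (ε ^ 2) • (twShift ε (m + 1))ᵀ := by
        rw [h2, pow_two, mul_smul, scalar_apply, ← smul_eq_diagonal_mul]
    _ = _ := by rw [hε, one_smul]

/-- The characteristic polynomial of `Z + Z⁻¹` is `C_n(t) - 2ε`: writing `t = a + b` with `ab = 1`
one has `t - (Z + Zᵀ) = b (a - Z) (a - Z)ᵀ`. -/
theorem twShift_charpoly_add {ε : ℝ} (hε : ε ^ 2 = 1) (m : ℕ) :
    (twShift ε (m + 1) + (twShift ε (m + 1))ᵀ).charpoly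
      = Chebyshev.C ℝ (m + 1 : ℕ) - C (2 * ε) := by
  -- Real `a` and `b` exist for every `t > 2`, which suffices.
  apply Polynomial.eq_of_infinite_eval_eq
  refine (Set.Ioi_infinite (2 : ℝ)).mono fun t ht => ?_
  have ht : 2 < t := ht
  obtain ⟨a, b, hab, hs⟩ : ∃ a b : ℝ, a * b = 1 ∧ a + b = t := by
    have h0 : (0 : ℝ) ≤ t ^ 2 - 4 := by nlinarith
    refine ⟨(t + √(t ^ 2 - 4)) / 2, (t - √(t ^ 2 - 4)) / 2, ?_, by ring⟩
    linear_combination (-1 / 4 : ℝ) * Real.sq_sqrt h0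
  subst hs
  have h1 := twShift_mul_transpose hε (m + 1)
  have hab' : a ^ (m + 1) * b ^ (m + 1) = 1 := by rw [← mul_pow, hab, one_pow]
  set Z := twShift ε (m + 1) with hZ
  have hdet : ((scalar (Fin (m + 1)) a - Z) * (b • (scalar (Fin (m + 1)) a - Z)ᵀ)).det
      = (a ^ (m + 1) - ε) * (b ^ (m + 1) * (a ^ (m + 1) - ε)) := by
    rw [det_mul, det_smul, det_transpose, twShift_charpoly_eval, Fintype.card_fin]
  have hfac : (scalar (Fin (m + 1)) a - Z) * (b • (scalar (Fin (m + 1)) a - Z)ᵀ)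
      = scalar (Fin (m + 1)) (a + b) - (Z + Zᵀ) := by
    have hs : ∀ c : ℝ, scalar (Fin (m + 1)) c = c • (1 : Matrix (Fin (m + 1)) (Fin (m + 1)) ℝ) := by
      intro c; simp [smul_one_eq_diagonal]
    simp only [hs, transpose_sub, transpose_smul, transpose_one, smul_sub, mul_sub, sub_mul,
      smul_mul_assoc, mul_smul_comm, one_mul, mul_one, h1, smul_smul, mul_comm b a, hab, add_smul,
      one_smul]
    abel
  show eval _ _ = eval _ _
  rw [eval_charpoly, ← hfac, hdet, eval_sub, eval_C, (chebC_eval hab m).2]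
  linear_combination (a ^ (m + 1) - 2 * ε) * hab' + b ^ (m + 1) * hε

/-! ### The determinant of one cell -/

theorem det_four {R : Type*} [CommRing R] (c0 c1 c2 c3 u v : R) :
    (!![c0, 1, 0, v; 1, c1, 1, 0; 0, 1, c2, 1; u, 0, 1, c3]).det
      = c0 * c1 * c2 * c3 - c0 * c1 - c0 * c3 - c2 * c3 - u * v * (c1 * c2 - 1) + 1 - u - v := by
  simp [det_succ_row_zero, Fin.sum_univ_succ, Fin.succAbove]
  ring

/-- The matrix `x - (A + ε B)` seen as a `4 × 4` matrix over `ℝ[X]`, the variable standing for the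
twisted shift `Z` of size `m + 1`. The upper right corner is the polynomial in `Z` that equals
`Z⁻¹`. -/
noncomputable def cell (ε x : ℝ) (m : ℕ) : Matrix (Fin 4) (Fin 4) ℝ[X] :=
  !![C (x - (3 - ε)), 1, 0, C ε * X ^ m; 1, C (x - 2), 1, 0; 0, 1, C (x - 2), 1;
    X, 0, 1, C (x - (3 - ε))]

/-- The discriminant of the periodic operator `A + ε B` of period four: the determinant of
`cell ε x m` is `disc ε x - Z - Z⁻¹`. -/
noncomputable def disc (ε : ℝ) : ℝ[X] :=
  (X - C (3 - ε)) ^ 2 * (X - 2) ^ 2 - 2 * (X - C (3 - ε)) * (X - 2) - (X - C (3 - ε)) ^ 2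
   - (X - 2) ^ 2 + 2

/-- By `Matrix.det_det`, the determinant of a block matrix with commuting blocks is the determinant
of its blockwise determinant, here `disc ε x - (Z + Z⁻¹)`. -/
theorem cell_det {ε : ℝ} (hε : ε ^ 2 = 1) (x : ℝ) (m : ℕ) :
    (comp _ _ _ _ ℝ ((cell ε x m).map (aeval (twShift ε (m + 1))))).det
      = ((Chebyshev.C ℝ (m + 1 : ℕ)).comp (disc ε) - C (2 * ε)).eval x := by
  have h := det_det (cell ε x m) ((aeval (twShift ε (m + 1))).toRingHom : ℝ[X] →+* Matrix _ _ ℝ)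
  refine h.symm.trans ?_
  have hZ : (twShift ε (m + 1)) * (twShift ε (m + 1))ᵀ = 1 := twShift_mul_transpose hε (m + 1)
  have hq : aeval (twShift ε (m + 1)) (C ε * X ^ m : ℝ[X]) = (twShift ε (m + 1))ᵀ := by
    rw [← twShift_transpose hε m]
    simp [Algebra.smul_def]
  have hd : (cell ε x m).det = C ((disc ε).eval x)
      - (X * (C ε * X ^ m) - 1) * ((C (x - 2)) ^ 2 - 1) - (X + C ε * X ^ m) := by
    rw [cell, det_four]
    simp only [disc, eval_add, eval_sub, eval_mul, eval_pow, eval_X, eval_C, eval_ofNat, C_add,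
      C_sub, C_mul, C_pow, C_ofNat]
    ring
  have hf : aeval (twShift ε (m + 1)) (cell ε x m).det = scalar (Fin (m + 1)) ((disc ε).eval x)
      - (twShift ε (m + 1) + (twShift ε (m + 1))ᵀ) := by
    rw [hd]
    simp only [map_sub, map_add, map_mul _ (X * (C ε * X ^ m) - 1), map_mul _ X, map_one, hq,
      aeval_X, hZ, sub_self, zero_mul, sub_zero, aeval_C]
    rfl
  refine (congrArg det hf).trans ?_
  rw [← eval_charpoly, twShift_charpoly_add hε, eval_sub, eval_sub, eval_comp, eval_C, eval_C]

/-! ### Splitting the Laplacian by the symmetry `u ↔ v` -/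

/-- The diagonal block of the Laplacian: degrees, and the adjacency inside one of the two paths. -/
def mobA (n : ℕ) : Matrix (Fin (4 * n)) (Fin (4 * n)) ℝ := Matrix.of fun i j =>
  (if i = j then (if (i.val + 1) % 4 = 0 ∨ (i.val + 1) % 4 = 1 then 3 else 2) else 0)
    - (if i.val + 1 = j.val ∨ j.val + 1 = i.val then 1 else 0)

/-- The off-diagonal block of the Laplacian: minus the adjacency between the two paths, that is
the rungs and the two twisted edges. -/
def mobB (n : ℕ) : Matrix (Fin (4 * n)) (Fin (4 * n)) ℝ := Matrix.of fun i j =>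
  -(if (i = j ∧ ((i.val + 1) % 4 = 0 ∨ (i.val + 1) % 4 = 1)) ∨
      (i.val = 0 ∧ j.val = 4 * n - 1) ∨ (i.val = 4 * n - 1 ∧ j.val = 0) then 1 else 0)

theorem mobius_adj_inl_inl (n : ℕ) (i j : Fin (4 * n)) :
    (mobius n).Adj (Sum.inl i) (Sum.inl j) ↔ i.val + 1 = j.val ∨ j.val + 1 = i.val := by
  simp only [mobius, SimpleGraph.fromRel_adj, mobiusRel, ne_eq, Sum.inl.injEq, Fin.ext_iff]
  omega

theorem mobius_adj_inr_inr (n : ℕ) (i j : Fin (4 * n)) :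
    (mobius n).Adj (Sum.inr i) (Sum.inr j) ↔ i.val + 1 = j.val ∨ j.val + 1 = i.val := by
  simp only [mobius, SimpleGraph.fromRel_adj, mobiusRel, ne_eq, Sum.inr.injEq, Fin.ext_iff]
  omega

theorem mobius_adj_inl_inr (n : ℕ) (i j : Fin (4 * n)) :
    (mobius n).Adj (Sum.inl i) (Sum.inr j) ↔
      (i = j ∧ ((i.val + 1) % 4 = 0 ∨ (i.val + 1) % 4 = 1)) ∨
      (i.val = 0 ∧ j.val = 4 * n - 1) ∨ (i.val = 4 * n - 1 ∧ j.val = 0) := by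
  simp [mobius, SimpleGraph.fromRel_adj, mobiusRel]

theorem mobius_adj_inr_inl (n : ℕ) (i j : Fin (4 * n)) :
    (mobius n).Adj (Sum.inr i) (Sum.inl j) ↔ (mobius n).Adj (Sum.inl i) (Sum.inr j) := by
  rw [SimpleGraph.adj_comm]
  simp only [mobius_adj_inl_inr, Fin.ext_iff]
  omega

/-- The end vertices of each path lose a path neighbour and gain a twisted edge, so the degree only
depends on whether there is a rung. -/
theorem mobius_degree_inl (n : ℕ) (i : Fin (4 * n)) :
    (mobius n).degree (Sum.inl i) =
      if (i.val + 1) % 4 = 0 ∨ (i.val + 1) % 4 = 1 then 3 else 2 := by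
  have hi := i.2
  have key : ∀ s : Finset (Fin (4 * n) ⊕ Fin (4 * n)),
      (∀ w, (mobius n).Adj (Sum.inl i) w ↔ w ∈ s) → (mobius n).degree (Sum.inl i) = s.card := by
    intro s hs
    rw [← SimpleGraph.card_neighborFinset_eq_degree]
    congr 1
    ext w
    rw [SimpleGraph.mem_neighborFinset, hs]
  split_ifs with h
  · by_cases h0 : (i.val + 1) % 4 = 1
    · by_cases h1 : i.val = 0
      · rw [key {Sum.inl ⟨i.val + 1, by omega⟩, Sum.inr i, Sum.inr ⟨4 * n - 1, by omega⟩}]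
        · rw [Finset.card_eq_three]
          refine ⟨_, _, _, ?_, ?_, ?_, rfl⟩ <;> simp [Fin.ext_iff] <;> omega
        · rintro (j | j) <;> simp [mobius_adj_inl_inl, mobius_adj_inl_inr, Fin.ext_iff] <;> omega
      · rw [key {Sum.inl ⟨i.val + 1, by omega⟩, Sum.inr i, Sum.inl ⟨i.val - 1, by omega⟩}]
        · rw [Finset.card_eq_three]
          refine ⟨_, _, _, ?_, ?_, ?_, rfl⟩ <;> simp [Fin.ext_iff] <;> omega
        · rintro (j | j) <;> simp [mobius_adj_inl_inl, mobius_adj_inl_inr, Fin.ext_iff] <;> omega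
    · by_cases h1 : i.val = 4 * n - 1
      · rw [key {Sum.inl ⟨i.val - 1, by omega⟩, Sum.inr i, Sum.inr ⟨0, by omega⟩}]
        · rw [Finset.card_eq_three]
          refine ⟨_, _, _, ?_, ?_, ?_, rfl⟩ <;> simp [Fin.ext_iff] <;> omega
        · rintro (j | j) <;> simp [mobius_adj_inl_inl, mobius_adj_inl_inr, Fin.ext_iff] <;> omega
      · rw [key {Sum.inl ⟨i.val - 1, by omega⟩, Sum.inr i, Sum.inl ⟨i.val + 1, by omega⟩}]
        · rw [Finset.card_eq_three]
          refine ⟨_, _, _, ?_, ?_, ?_, rfl⟩ <;> simp [Fin.ext_iff]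
        · rintro (j | j) <;> simp [mobius_adj_inl_inl, mobius_adj_inl_inr, Fin.ext_iff] <;> omega
  · rw [key {Sum.inl ⟨i.val - 1, by omega⟩, Sum.inl ⟨i.val + 1, by omega⟩}]
    · rw [Finset.card_eq_two]
      refine ⟨_, _, ?_, rfl⟩
      simp [Fin.ext_iff]
    · rintro (j | j) <;> simp [mobius_adj_inl_inl, mobius_adj_inl_inr, Fin.ext_iff] <;> omega

theorem mobius_degree_inr (n : ℕ) (i : Fin (4 * n)) :
    (mobius n).degree (Sum.inr i) = (mobius n).degree (Sum.inl i) := by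
  -- Exchanging the two paths is a graph automorphism.
  let f : mobius n ≃g mobius n :=
    { Equiv.sumComm _ _ with
      map_rel_iff' := by
        rintro (a | a) (b | b) <;>
          simp [mobius_adj_inl_inl, mobius_adj_inr_inr, mobius_adj_inr_inl] }
  exact f.degree_eq (Sum.inl i)

theorem mobius_lapMatrix (n : ℕ) :
    (mobius n).lapMatrix ℝ = fromBlocks (mobA n) (mobB n) (mobB n) (mobA n) := by
  ext (i | i) (j | j) <;>
    simp [SimpleGraph.lapMatrix, SimpleGraph.degMatrix, diagonal_apply, SimpleGraph.adjMatrix_apply,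
      mobA, mobB, mobius_adj_inl_inl, mobius_adj_inr_inr, mobius_adj_inr_inl, mobius_adj_inl_inr,
      mobius_degree_inr, mobius_degree_inl]

/-- Adding the second block row to the first and subtracting the first block column from the second
makes the matrix block triangular. -/
theorem det_symm_blocks {m : Type*} [Fintype m] [DecidableEq m] (A B : Matrix m m ℝ) :
    (fromBlocks A B B A).det = (A + B).det * (A - B).det := by
  have h : fromBlocks 1 1 0 1 * fromBlocks A B B A * fromBlocks 1 (-1) 0 1
      = fromBlocks (A + B) 0 B (A - B) := by
    simp [fromBlocks_multiply]
    constructor <;> abel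
  have h' := congrArg det h
  simpa [det_mul, det_fromBlocks_zero₂₁, det_fromBlocks_zero₁₂] using h'

theorem lap_charpoly_eval (n : ℕ) (x : ℝ) :
    ((mobius n).lapMatrix ℝ).charpoly.eval x
      = (scalar _ x - (mobA n + mobB n)).det * (scalar _ x - (mobA n - mobB n)).det := by
  rw [eval_charpoly, mobius_lapMatrix]
  have : scalar (Fin (4 * n) ⊕ Fin (4 * n)) x - fromBlocks (mobA n) (mobB n) (mobB n) (mobA n)
     = fromBlocks (scalar _ x - mobA n) (-mobB n) (-mobB n) (scalar _ x - mobA n) := by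
    ext (i | i) (j | j) <;> simp [diagonal_apply]
  rw [this, det_symm_blocks]
  congr 2 <;> abel

/-! ### The characteristic polynomial of the Laplacian -/

/-- The position `4 b + s` in the path as the pair of its place `s` in a cell and its cell `b`. -/
def cellEquiv (n : ℕ) : Fin 4 × Fin n ≃ Fin (4 * n) :=
  (Equiv.prodComm _ _).trans (finProdFinEquiv.trans (finCongr (mul_comm n 4)))

theorem cellEquiv_val (n : ℕ) (s : Fin 4) (b : Fin n) :
    (cellEquiv n (s, b)).val = s.val + 4 * b.val := rfl

/-- The only entries joining different cells are the path edges between consecutive cells, giving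
`Z` and `Zᵀ`, and the twisted edges, which enter `A + ε B` with the sign `ε` that closes up the
twisted shift. -/
theorem submatrix_eq_cell {ε : ℝ} (hε : ε ^ 2 = 1) (x : ℝ) (m : ℕ) :
    (scalar (Fin (4 * (m + 1))) x - (mobA (m + 1) + ε • mobB (m + 1))).submatrix
        (cellEquiv (m + 1)) (cellEquiv (m + 1))
      = comp _ _ _ _ ℝ ((cell ε x m).map (aeval (twShift ε (m + 1)))) := by
  have hq : aeval (twShift ε (m + 1)) (C ε * X ^ m : ℝ[X]) = (twShift ε (m + 1))ᵀ := by
    rw [← twShift_transpose hε m]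
    simp [Algebra.smul_def]
  have hC : ∀ (c : ℝ) (i j : Fin (m + 1)), (aeval (twShift ε (m + 1)) (C c : ℝ[X])) i j
      = if i = j then c else 0 := by
    intro c i j
    rw [aeval_C, algebraMap_matrix_apply]
    rfl
  ext ⟨s, i⟩ ⟨t, j⟩
  have hi := i.2
  have hj := j.2
  have hl : (comp (Fin 4) (Fin 4) (Fin (m + 1)) (Fin (m + 1)) ℝ
      ((cell ε x m).map (aeval (twShift ε (m + 1))))) (s, i) (t, j)
      = (aeval (twShift ε (m + 1)) (cell ε x m s t)) i j := rfl
  rw [hl]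
  clear hl
  simp only [submatrix_apply, Matrix.sub_apply, Matrix.add_apply, Matrix.smul_apply, scalar_apply,
    diagonal_apply, mobA, mobB, of_apply, Fin.ext_iff, cellEquiv_val, smul_eq_mul]
  fin_cases s <;> fin_cases t <;>
    simp only [Fin.zero_eta, Fin.mk_one, Fin.reduceFinMk, cell, of_apply, cons_val', cons_val_zero,
      cons_val_one, cons_val, hq, hC, map_one, map_zero, aeval_X, one_apply, transpose_apply,
      twShift_apply, Fin.ext_iff, Matrix.zero_apply] <;>
    clear hC hq <;> grind

theorem lap_charpoly (n : ℕ) (hn : 1 ≤ n) :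
    ((mobius n).lapMatrix ℝ).charpoly
      = ((Chebyshev.C ℝ n).comp (disc 1) - 2) * ((Chebyshev.C ℝ n).comp (disc (-1)) + 2) := by
  obtain ⟨m, rfl⟩ := Nat.exists_eq_add_of_le' hn
  have key : ∀ ε : ℝ, ε ^ 2 = 1 → ∀ x,
      (scalar (Fin (4 * (m + 1))) x - (mobA (m + 1) + ε • mobB (m + 1))).det
      = ((Chebyshev.C ℝ (m + 1 : ℕ)).comp (disc ε) - C (2 * ε)).eval x := by
    intro ε hε x
    rw [← cell_det hε, ← submatrix_eq_cell hε, det_submatrix_equiv_self]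
  refine Polynomial.funext fun x => ?_
  have h1 := key 1 (by norm_num) x
  have h2 := key (-1) (by norm_num) x
  rw [one_smul] at h1
  rw [neg_one_smul, ← sub_eq_add_neg] at h2
  rw [lap_charpoly_eval, h1, h2]
  simp

/-! ### Reading off the sum of reciprocals -/

/-- Minus the logarithmic derivative at `0` of a monic polynomial is the sum of the reciprocals of
its roots. -/
theorem prod_deriv {ι : Type*} (s : Finset ι) (r : ι → ℝ) (hr : ∀ i ∈ s, r i ≠ 0) :
    (derivative (∏ i ∈ s, (X - C (r i)))).eval 0
      = -((∏ i ∈ s, (X - C (r i))).eval 0) * ∑ i ∈ s, (r i)⁻¹ := by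
  classical
  induction s using Finset.induction_on with
  | empty => simp
  | insert a s ha ih =>
    have h0 := hr a (Finset.mem_insert_self a s)
    rw [Finset.prod_insert ha, Finset.sum_insert ha, derivative_mul, eval_add, eval_mul, eval_mul,
      ih fun i hi => hr i (Finset.mem_insert_of_mem hi)]
    simp only [derivative_sub, derivative_X, derivative_C, sub_zero, eval_one, one_mul, eval_sub,
      eval_X, eval_C, zero_sub, eval_mul]
    field_simp

theorem disc_one : (disc 1).eval 0 = 2 ∧ (derivative (disc 1)).eval 0 = -16 ∧
    (derivative (derivative (disc 1))).eval 0 = 40 := by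
  simp [disc, derivative_pow]
  norm_num

theorem disc_neg_one : (disc (-1)).eval 0 = 30 ∧ (derivative (disc (-1))).eval 0 = -72 := by
  simp [disc, derivative_pow]
  norm_num

theorem stmt_12 (n : ℕ) (hn : 1 ≤ n) (μs : Fin (8 * n) → ℝ)
    (hmono : Monotone μs)
    (hzero : μs ⟨0, by omega⟩ = 0)
    (hpos : ∀ i : Fin (8 * n), i ≠ ⟨0, by omega⟩ → 0 < μs i)
    (hchar : ((mobius n).lapMatrix ℝ).charpoly
      = ∏ i : Fin (8 * n), (Polynomial.X - Polynomial.C (μs i))) :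
    (8 * n : ℝ) * ∑ i ∈ Finset.univ.erase (⟨0, by omega⟩ : Fin (8 * n)), (μs i)⁻¹
      = (32 * (n : ℝ) ^ 3 - 2 * n) / 3
        + (36 * (n : ℝ) ^ 2 * Real.sqrt 14 / 7) * (mu ^ n - nu ^ n) / (mu ^ n + nu ^ n + 2) := by
  have hn0 : (0 : ℝ) < n := by exact_mod_cast hn
  have hq := prod_deriv (Finset.univ.erase (⟨0, by omega⟩ : Fin (8 * n))) μs
    fun i hi => (hpos i (Finset.ne_of_mem_erase hi)).ne'
  rw [lap_charpoly n hn, ← Finset.mul_prod_erase Finset.univ _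
    (Finset.mem_univ (⟨0, by omega⟩ : Fin (8 * n))), hzero, C_0, sub_zero] at hchar
  set r := ∏ i ∈ Finset.univ.erase (⟨0, by omega⟩ : Fin (8 * n)), (X - C (μs i)) with hr
  set S := ∑ i ∈ Finset.univ.erase (⟨0, by omega⟩ : Fin (8 * n)), (μs i)⁻¹
  obtain ⟨d1, d2, d3⟩ := disc_one
  obtain ⟨e1, e2⟩ := disc_neg_one
  have h14 : √14 ^ 2 = (14 : ℝ) := Real.sq_sqrt (by norm_num)
  have h14' : 0 < √(14 : ℝ) := by positivity
  have hmn : mu * nu = 1 := by unfold mu nu; linear_combination -16 * h14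
  have hs : mu + nu = 30 := by unfold mu nu; ring
  have hd : mu - nu = 8 * √14 := by unfold mu nu; ring
  have hC30 := (chebC_eval hmn n).1
  have hD30 := (chebC_deriv hmn n).1
  rw [hs] at hC30 hD30
  rw [hd] at hD30
  obtain ⟨hD2, hE2⟩ := (chebC_two n).1
  have hC2 : (Chebyshev.C ℝ (n : ℤ)).eval 2 = 2 := Chebyshev.C_eval_two _ _
  -- Since `hchar` reads `P₁ P₂ = X r` with `P₁(0) = 0`, its first derivative at `0` gives `r(0)`
  -- and its second derivative gives `2 r'(0)`.
  have hder1 := congrArg (fun p => (derivative p).eval 0) hchar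
  have hder2 := congrArg (fun p => (derivative (derivative p)).eval 0) hchar
  simp only [derivative_mul, derivative_sub, derivative_add, derivative_comp, derivative_ofNat,
    derivative_X, eval_add, eval_sub, eval_mul, eval_comp, eval_ofNat, eval_X,
    d1, d2, d3, e1, e2, hC30, hC2, hD2, hE2, sub_zero, add_zero, sub_self, zero_mul,
    one_mul] at hder1 hder2
  rw [hq, ← hder1] at hder2
  set D := (derivative (Chebyshev.C ℝ (n : ℤ))).eval 30
  have hD : D = n * √14 / 112 * (mu ^ n - nu ^ n) := by
    linear_combination √14 / 112 * hD30 - D / 14 * h14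
  have hmu : 0 < mu := by unfold mu; positivity
  have hnu : 0 < nu := pos_of_mul_pos_right (hmn ▸ one_pos) hmu.le
  have hQ : 0 < mu ^ n + nu ^ n + 2 := by positivity
  have hS : S * (mu ^ n + nu ^ n + 2)
      = (16 * (n : ℝ) ^ 2 - 1) / 12 * (mu ^ n + nu ^ n + 2) + 72 * D := by
    refine mul_left_cancel₀ (pow_pos hn0 2).ne' ?_
    linear_combination (-1 / 32 : ℝ) * hder2
  rw [hD, ← eq_div_iff hQ.ne'] at hS
  rw [hS]
  field_simp
  ring
end

section
/- Let n ≥ 1 and let Q'_n(8,4) be the cylinder octagonal-quadrilateral network: the simple graph on the 8n vertices u_1,…,u_{4n}, v_1,…,v_{4n} whose edges are u_i u_{i+1} and v_i v_{i+1} for 1 ≤ i ≤ 4n−1, the closing edges u_{4n} u_1 and v_{4n} v_1, and u_i v_i for every i ≡ 0 or 1 (mod 4). Let 0 = μ_1 < μ_2 ≤ ⋯ ≤ μ_{8n} be the eigenvalues of its Laplacian matrix, and set μ = 15 + 4√14, ν = 15 − 4√14. Then the complexity (number of spanning trees) of Q'_n(8,4), given by (1/(8n)) ∏_{i=2}^{8n}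 μ_i, equals 2n(μ^n + ν^n − 2). -/
/-- Underlying relation of the cylinder octagonal-quadrilateral network `Q'_n(8,4)`:
`Sum.inl i` is the vertex `u_{i+1}`, `Sum.inr i` is the vertex `v_{i+1}`. -/
def cylinderRel (n : ℕ) : (Fin (4 * n) ⊕ Fin (4 * n)) → (Fin (4 * n) ⊕ Fin (4 * n)) → Prop
  | Sum.inl i, Sum.inl j => i.val + 1 = j.val ∨ (i.val = 4 * n - 1 ∧ j.val = 0)
  | Sum.inr i, Sum.inr j => i.val + 1 = j.val ∨ (i.val = 4 * n - 1 ∧ j.val = 0)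
  | Sum.inl i, Sum.inr j => i = j ∧ ((i.val + 1) % 4 = 0 ∨ (i.val + 1) % 4 = 1)
  | Sum.inr _, Sum.inl _ => False

instance (n : ℕ) : DecidableRel (cylinderRel n) := fun a b => by
  rcases a with i | i <;> rcases b with j | j <;> simp only [cylinderRel] <;> infer_instance

/-- The cylinder octagonal-quadrilateral network `Q'_n(8,4)`. -/
def cylinder (n : ℕ) : SimpleGraph (Fin (4 * n) ⊕ Fin (4 * n)) :=
  SimpleGraph.fromRel (cylinderRel n)

instance (n : ℕ) : DecidableRel (cylinder n).Adj := fun a b =>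
  decidable_of_iff (a ≠ b ∧ (cylinderRel n a b ∨ cylinderRel n b a)) Iff.rfl

section

open Matrix Polynomial

/-! ### Determinants of cyclic Jacobi matrices -/

/-- The solution of the three-term recurrence `x (k + 2) = d (k + 1) * x (k + 1) - x k` with
`x 0 = a` and `x 1 = b`. -/
def jacobiSol {R : Type*} [CommRing R] (d : ℕ → R) (a b : R) : ℕ → R
  | 0 => a
  | 1 => b
  | k + 2 => d (k + 1) * jacobiSol d a b (k + 1) - jacobiSol d a b k

/-- The cyclic Jacobi matrix of size `N`: diagonal `d`, and `-1` at each of the two cyclic neighbours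
of an index (the two contributions add up when `N ≤ 2`). -/
def cyclicJacobi {R : Type*} [CommRing R] (N : ℕ) (d : ℕ → R) : Matrix (Fin N) (Fin N) R :=
  fun i j => (if i = j then d i else 0) - (if j.val = (i.val + 1) % N then 1 else 0)
    - (if i.val = (j.val + 1) % N then 1 else 0)

/-- The trace of the monodromy `(x 0, x 1) ↦ (x N, x (N + 1))` of the recurrence `jacobiSol d`. -/
def monodromyTrace {R : Type*} [CommRing R] (d : ℕ → R) (N : ℕ) : R := jacobiSol d 1 0 N + jacobiSol d 0 1 (N + 1)

/-- The monodromy has determinant `1`. -/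
lemma wronskian {R : Type*} [CommRing R] (d : ℕ → R) (k : ℕ) :
    jacobiSol d 1 0 k * jacobiSol d 0 1 (k + 1) - jacobiSol d 0 1 k * jacobiSol d 1 0 (k + 1) = 1 := by
  induction k with
  | zero => simp [jacobiSol]
  | succ k ih => simp only [jacobiSol]; linear_combination ih

/-- Entry `(j, k)` of the unipotent lower triangular matrix whose columns `0` and `1` are the two
fundamental solutions of the recurrence and whose other columns are those of the identity. -/
def fundCol {R : Type*} [CommRing R] (d : ℕ → R) (j : ℕ) : ℕ → R
  | 0 => jacobiSol d 1 0 j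
  | 1 => jacobiSol d 0 1 j
  | k + 2 => if j = k + 2 then 1 else 0

lemma eq_succ_mod_iff {N : ℕ} (i j : Fin N) :
    (j.val = (i.val + 1) % N) ↔ j = ⟨(i.val + 1) % N, Nat.mod_lt _ i.pos⟩ := by
  rw [Fin.ext_iff]

lemma eq_pred_mod_iff {N : ℕ} (i j : Fin N) :
    (i.val = (j.val + 1) % N) ↔ j = ⟨(i.val + (N - 1)) % N, Nat.mod_lt _ i.pos⟩ := by
  rw [Fin.ext_iff]
  change _ ↔ j.val = (i.val + (N - 1)) % N
  have hi := i.isLt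
  have hj := j.isLt
  have e1 : (j.val + 1) % N = if j.val + 1 = N then 0 else j.val + 1 := by
    split_ifs with h
    · rw [h, Nat.mod_self]
    · rw [Nat.mod_eq_of_lt (by omega)]
  have e2 : (i.val + (N - 1)) % N = if i.val = 0 then N - 1 else i.val - 1 := by
    split_ifs with h
    · rw [Nat.mod_eq_of_lt (by omega)]; omega
    · rw [show i.val + (N - 1) = i.val - 1 + N by omega, Nat.add_mod_right,
        Nat.mod_eq_of_lt (by omega)]
  rw [e1, e2]
  split_ifs <;> omega

lemma cyclicJacobi_mul_apply {R : Type*} [CommRing R] (N : ℕ) (d : ℕ → R) (q : ℕ → ℕ → R) (i k : Fin N) :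
    (cyclicJacobi N d * (of fun j k => q j k : Matrix (Fin N) (Fin N) R)) i k
      = d i * q i k - q ((i.val + 1) % N) k - q ((i.val + (N - 1)) % N) k := by
  simp only [mul_apply, cyclicJacobi, of_apply, sub_mul, Finset.sum_sub_distrib, eq_succ_mod_iff i,
    eq_pred_mod_iff i]
  simp

/-- The determinant of a cyclic Jacobi matrix is the trace of its monodromy minus `2`. Right
multiplication by the fundamental solutions in the first two columns, followed by a cyclic shift of
the rows, makes the matrix block upper triangular: a `2 × 2` block with determinant `det (T - 1)`
up to a row operation, `T` being the monodromy, and a lower triangular block with diagonal `-1`. -/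
theorem det_cyclicJacobi {R : Type*} [CommRing R] (N : ℕ) (hN : 2 ≤ N) (d : ℕ → R) (hd : d N = d 0) :
    (cyclicJacobi N d).det = monodromyTrace d N - 2 := by
  obtain ⟨m, rfl⟩ := Nat.exists_eq_add_of_le' hN
  set Q : Matrix (Fin (m + 2)) (Fin (m + 2)) R := of fun j k => fundCol d j k with hQ
  have hfund : ∀ j k : ℕ, j < k → k ≥ 2 → fundCol d j k = 0 := by
    intro j k hjk hk
    obtain ⟨k, rfl⟩ := Nat.exists_eq_add_of_le' hk
    simp only [fundCol]; rw [if_neg (by omega)]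
  have hdiag : ∀ j : ℕ, fundCol d j j = 1 := by
    intro j
    match j with
    | 0 => rfl
    | 1 => rfl
    | k + 2 => simp [fundCol]
  have hQdet : Q.det = 1 := by
    rw [det_of_isLowerTriangular]
    · simp [hQ, hdiag]
    · intro i j hij
      have hij' : i.val < j.val := hij
      have hj : j.val = 1 ∨ 2 ≤ j.val := by omega
      rcases hj with hj | hj
      · rw [hQ, of_apply, hj, show i.val = 0 by omega]; rfl
      · exact hfund _ _ hij' hj
  -- Row `i` of the matrix is the recurrence centred at `i`. The shift puts the recurrence centred at
  -- `r - 1` in row `r`, so that rows `r ≥ 2` annihilate the fundamental solutions and have last nonzero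
  -- entry `-1` in column `r`; rows `0` and `1` hold the two equations that wrap around.
  set K := (cyclicJacobi (m + 2) d * Q).submatrix (finRotate (m + 2)).symm id with hK
  have hKdet : K.det = (-1) ^ (m + 1) * (cyclicJacobi (m + 2) d).det := by
    rw [hK, det_permute, det_mul, hQdet, mul_one, Equiv.Perm.sign_symm, sign_finRotate]
    simp
  have hlow : ∀ r k : Fin (m + 2), 2 ≤ r.val →
      K r k = d (r - 1) * fundCol d (r - 1) k - fundCol d r k - fundCol d (r - 2) k := by
    intro r k hr
    have hr' := r.isLt
    have : (finRotate (m + 2)).symm r = ⟨r - 1, by omega⟩ := by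
      rw [Equiv.symm_apply_eq, finRotate_of_lt (by omega)]
      ext; simp; omega
    rw [hK, submatrix_apply, this, hQ, id, cyclicJacobi_mul_apply]
    simp only
    rw [show (r.val - 1 + 1) % (m + 2) = r by rw [Nat.mod_eq_of_lt] <;> omega,
      show (r.val - 1 + (m + 2 - 1)) % (m + 2) = r - 2 by
        rw [show r.val - 1 + (m + 2 - 1) = r.val - 2 + (m + 2) by omega, Nat.add_mod_right,
          Nat.mod_eq_of_lt (by omega)]]
  have h0 : ∀ k : Fin (m + 2), K 0 k = d (m + 1) * fundCol d (m + 1) k - fundCol d 0 k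
      - fundCol d m k := by
    intro k
    have : (finRotate (m + 2)).symm 0 = ⟨m + 1, by omega⟩ := by
      rw [Equiv.symm_apply_eq, finRotate_last']
      rfl
    rw [hK, submatrix_apply, this, hQ, id, cyclicJacobi_mul_apply]
    simp only
    rw [show (m + 1 + 1) % (m + 2) = 0 by rw [Nat.mod_self],
      show (m + 1 + (m + 2 - 1)) % (m + 2) = m by
        rw [show m + 1 + (m + 2 - 1) = m + (m + 2) by omega, Nat.add_mod_right,
          Nat.mod_eq_of_lt (by omega)]]
  have h1 : ∀ k : Fin (m + 2), K 1 k = d 0 * fundCol d 0 k - fundCol d 1 k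
      - fundCol d (m + 1) k := by
    intro k
    have : (finRotate (m + 2)).symm 1 = 0 := by
      rw [Equiv.symm_apply_eq, finRotate_apply]; simp
    rw [hK, submatrix_apply, this, hQ, id, cyclicJacobi_mul_apply]
    simp
  let e : Fin 2 ⊕ Fin m ≃ Fin (m + 2) := finSumFinEquiv.trans (finCongr (add_comm 2 m))
  have e1 : ∀ a : Fin 2, (e (Sum.inl a)).val = a := fun a => rfl
  have e2 : ∀ a : Fin m, (e (Sum.inr a)).val = 2 + a := fun a => rfl
  have hblk : K.submatrix e e = fromBlocks (K.submatrix e e).toBlocks₁₁ (K.submatrix e e).toBlocks₁₂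
      0 (K.submatrix e e).toBlocks₂₂ := by
    conv_lhs => rw [← fromBlocks_toBlocks (K.submatrix e e)]
    congr 1
    ext a b
    simp only [toBlocks₂₁, of_apply, submatrix_apply, Matrix.zero_apply]
    rw [hlow _ _ (by rw [e2]; omega), e1, e2]
    have : 2 + a.val - 2 = a := by omega
    rw [this, show 2 + a.val - 1 = a + 1 by omega, add_comm 2 a.val]
    fin_cases b <;> simp [fundCol, jacobiSol]
  have hD : (K.submatrix e e).toBlocks₂₂.det = (-1) ^ m := by
    rw [det_of_isLowerTriangular]
    · rw [Finset.prod_eq_pow_card (b := -1)]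
      · simp
      · intro a _
        simp only [toBlocks₂₂, of_apply, submatrix_apply]
        rw [hlow _ _ (by rw [e2]; omega), e2, hdiag, hfund _ _ (by omega) (by omega),
          hfund _ _ (by omega) (by omega)]
        ring
    · intro a b hab
      have hab' : a.val < b.val := hab
      simp only [toBlocks₂₂, of_apply, submatrix_apply]
      rw [hlow _ _ (by rw [e2]; omega), e2, e2, hfund _ _ (by omega) (by omega),
        hfund _ _ (by omega) (by omega), hfund _ _ (by omega) (by omega)]
      ring
  -- By periodicity of `d`, these two rows compare a solution at `N, N + 1` with its values at `0, 1`.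
  have hA : (K.submatrix e e).toBlocks₁₁.det = 2 - monodromyTrace d (m + 2) := by
    have x0 : e (Sum.inl 0) = 0 := rfl
    have x1 : e (Sum.inl 1) = 1 := rfl
    rw [det_fin_two]
    simp only [toBlocks₁₁, of_apply, submatrix_apply, x0, x1, h0, h1]
    have w := wronskian d (m + 1)
    simp only [monodromyTrace, Fin.val_zero, Fin.val_one, fundCol, jacobiSol, hd] at w ⊢
    linear_combination w
  have := det_submatrix_equiv_self e K
  rw [hblk, det_fromBlocks_zero₂₁, hA, hD, hKdet] at this
  -- The sign `(-1) ^ m` of the triangular block cancels that of the row rotation up to `-1`.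
  have hs : ((-1 : R) ^ m) * (-1) ^ m = 1 := by rw [← mul_pow]; simp
  rw [pow_succ] at this
  linear_combination ((-1 : R) ^ m) * this + (2 - monodromyTrace d (m + 2) + (cyclicJacobi (m + 2) d).det) * (-hs)

/-! ### Monodromy traces of the two diagonals -/

/-- The indicator that the index `i`, which stands for the vertices `u_{i+1}` and `v_{i+1}`, carries
a rung `u_{i+1} v_{i+1}`. -/
def rung (R : Type*) [CommRing R] (i : ℕ) : R :=
  if (i + 1) % 4 = 0 ∨ (i + 1) % 4 = 1 then 1 else 0

/-- Transfer over one period of the diagonal `2 + 2 * rung`. The transfer matrix has trace `30` and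
determinant `1`. -/
lemma jacobiSol_add_four {R : Type*} [CommRing R] (d : ℕ → R) (hd : ∀ i, d i = 2 + 2 * rung R i)
    (a b : R) (n : ℕ) :
    jacobiSol d a b (4 * n + 4) = 10 * jacobiSol d a b (4 * n + 1) - 7 * jacobiSol d a b (4 * n) ∧
    jacobiSol d a b (4 * n + 5) = 37 * jacobiSol d a b (4 * n + 1) - 26 * jacobiSol d a b (4 * n) := by
  have d1 : d (4 * n + 1) = 2 := by
    rw [hd, rung, if_neg (by omega)]; ring
  have d2 : d (4 * n + 2) = 2 := by
    rw [hd, rung, if_neg (by omega)]; ring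
  have d3 : d (4 * n + 3) = 4 := by
    rw [hd, rung, if_pos (by omega)]; ring
  have d4 : d (4 * n + 4) = 4 := by
    rw [hd, rung, if_pos (by omega)]; ring
  constructor <;> simp only [jacobiSol, d1, d2, d3, d4] <;> ring

lemma monodromyTrace_rung (d : ℕ → ℝ) (hd : ∀ i, d i = 2 + 2 * rung ℝ i) (n : ℕ) :
    monodromyTrace d (4 * n) = mu ^ n + nu ^ n := by
  have hs : Real.sqrt 14 ^ 2 = 14 := Real.sq_sqrt (by norm_num)
  have hmu : mu ^ 2 = 30 * mu - 1 := by rw [mu]; linear_combination 16 * hs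
  have hnu : nu ^ 2 = 30 * nu - 1 := by rw [nu]; linear_combination 16 * hs
  have key : ∀ k, monodromyTrace d (4 * (k + 2)) = 30 * monodromyTrace d (4 * (k + 1)) - monodromyTrace d (4 * k) := by
    intro k
    have c1 := jacobiSol_add_four d hd 1 0 k
    have c2 := jacobiSol_add_four d hd 1 0 (k + 1)
    have s1 := jacobiSol_add_four d hd 0 1 k
    have s2 := jacobiSol_add_four d hd 0 1 (k + 1)
    simp only [monodromyTrace]
    rw [show 4 * (k + 2) = 4 * (k + 1) + 4 by ring, c2.1, s2.2,
      show 4 * (k + 1) = 4 * k + 4 by ring, c1.1, c1.2, s1.1, s1.2]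
    ring
  induction n using Nat.twoStepInduction with
  | zero => norm_num [monodromyTrace, jacobiSol]
  | one =>
    have c1 := (jacobiSol_add_four d hd 1 0 0).1
    have s1 := (jacobiSol_add_four d hd 0 1 0).2
    simp only [monodromyTrace]
    rw [show 4 * 1 = 4 * 0 + 4 by ring, c1, s1]
    norm_num [jacobiSol, mu, nu]
  | more k ih1 ih2 =>
    rw [key, ih1, ih2]
    linear_combination -mu ^ k * hmu - nu ^ k * hnu

/-- First-order expansion at `X = 0` of the monodromy trace of the unweighted cycle. At `X = 0` the
solutions are affine in `k`, and their derivatives are cubic in `k`. -/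
lemma monodromyTrace_const (N : ℕ) :
    (monodromyTrace (fun _ => (2 - X : ℝ[X])) N).eval 0 = 2 ∧
      (derivative (monodromyTrace (fun _ => (2 - X : ℝ[X])) N)).eval 0 = -(N : ℝ) ^ 2 := by
  have v : ∀ (a b : ℝ) (k : ℕ), (jacobiSol (fun _ => (2 - X : ℝ[X])) (C a) (C b) k).eval 0
      = a + k * (b - a) := by
    intro a b k
    induction k using Nat.twoStepInduction with
    | zero => simp [jacobiSol]
    | one => simp [jacobiSol]
    | more k ih1 ih2 => simp [jacobiSol, ih1, ih2]; ring
  have w : ∀ (a b : ℝ) (k : ℕ),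
      (derivative (jacobiSol (fun _ => (2 - X : ℝ[X])) (C a) (C b) k)).eval 0
      = - (a * (k * (k - 1) / 2) + (b - a) * (k * (k - 1) * (k + 1) / 6)) := by
    intro a b k
    induction k using Nat.twoStepInduction with
    | zero => simp [jacobiSol]
    | one => simp [jacobiSol]
    | more k ih1 ih2 => simp [jacobiSol, ih1, ih2, v]; ring
  have v1 := v 1 0; have v2 := v 0 1; have w1 := w 1 0; have w2 := w 0 1
  simp only [C_0, C_1] at v1 v2 w1 w2
  constructor
  · simp [monodromyTrace, v1, v2]; ring
  · simp only [monodromyTrace, derivative_add, eval_add, w1, w2]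
    push_cast; ring

/-! ### The Laplacian of the network -/

/-- Conjugation by a block shear makes the matrix block triangular. -/
lemma det_fromBlocks_swap {R ι : Type*} [CommRing R] [Fintype ι] [DecidableEq ι]
    (A B : Matrix ι ι R) : (fromBlocks A B B A).det = (A + B).det * (A - B).det := by
  have h : fromBlocks 1 1 0 1 * fromBlocks A B B A * fromBlocks 1 (-1) 0 1
      = fromBlocks (A + B) 0 B (A - B) := by
    simp [fromBlocks_multiply]
    constructor <;> abel
  have := congrArg det h
  simpa [det_mul, det_fromBlocks_zero₂₁, det_fromBlocks_zero₁₂] using this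

lemma succ_mod_cases {N : ℕ} (i : Fin N) :
    (i.val + 1 = N ∧ (i.val + 1) % N = 0) ∨ (i.val + 1 < N ∧ (i.val + 1) % N = i.val + 1) := by
  have := i.isLt
  by_cases h : i.val + 1 = N
  · left; exact ⟨h, by rw [h, Nat.mod_self]⟩
  · right; exact ⟨by omega, Nat.mod_eq_of_lt (by omega)⟩

lemma adj_ll (n : ℕ) (i j : Fin (4 * n)) : (cylinder n).Adj (Sum.inl i) (Sum.inl j) ↔
    j.val = (i.val + 1) % (4 * n) ∨ i.val = (j.val + 1) % (4 * n) := by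
  simp only [cylinder, SimpleGraph.fromRel_adj, cylinderRel, ne_eq, Sum.inl.injEq, Fin.ext_iff]
  have := succ_mod_cases i
  have := succ_mod_cases j
  omega

lemma adj_rr (n : ℕ) (i j : Fin (4 * n)) : (cylinder n).Adj (Sum.inr i) (Sum.inr j) ↔
    j.val = (i.val + 1) % (4 * n) ∨ i.val = (j.val + 1) % (4 * n) := by
  simp only [cylinder, SimpleGraph.fromRel_adj, cylinderRel, ne_eq, Sum.inr.injEq, Fin.ext_iff]
  have := succ_mod_cases i
  have := succ_mod_cases j
  omega

lemma adj_lr (n : ℕ) (i j : Fin (4 * n)) : (cylinder n).Adj (Sum.inl i) (Sum.inr j) ↔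
    i = j ∧ ((i.val + 1) % 4 = 0 ∨ (i.val + 1) % 4 = 1) := by
  simp [cylinder, SimpleGraph.fromRel_adj, cylinderRel]

lemma adj_rl (n : ℕ) (i j : Fin (4 * n)) : (cylinder n).Adj (Sum.inr i) (Sum.inl j) ↔
    i = j ∧ ((i.val + 1) % 4 = 0 ∨ (i.val + 1) % 4 = 1) := by
  rw [SimpleGraph.adj_comm, adj_lr]
  constructor <;> rintro ⟨rfl, h⟩ <;> exact ⟨rfl, h⟩

/-- The two cyclic neighbours of an index are distinct, as `4 * n ≥ 3` whenever an index exists. -/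
lemma ite_cycle {n : ℕ} (i j : Fin (4 * n)) :
    (if j.val = (i.val + 1) % (4 * n) ∨ i.val = (j.val + 1) % (4 * n) then (1 : ℝ) else 0)
    = (if j.val = (i.val + 1) % (4 * n) then 1 else 0)
      + (if i.val = (j.val + 1) % (4 * n) then 1 else 0) := by
  have := succ_mod_cases i
  have := succ_mod_cases j
  by_cases h1 : j.val = (i.val + 1) % (4 * n)
  · have h2 : ¬ i.val = (j.val + 1) % (4 * n) := by omega
    rw [if_pos (Or.inl h1), if_pos h1, if_neg h2, add_zero]
  · simp [h1]

lemma ite_rung {n : ℕ} (i j : Fin (4 * n)) :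
    (if i = j ∧ ((i.val + 1) % 4 = 0 ∨ (i.val + 1) % 4 = 1) then (1 : ℝ) else 0)
    = if i = j then rung ℝ i else 0 := by
  rw [rung, ite_and]

lemma degree_eq (n : ℕ) (i : Fin (4 * n)) :
    ((cylinder n).degree (Sum.inl i) : ℝ) = 2 + rung ℝ i ∧
      ((cylinder n).degree (Sum.inr i) : ℝ) = 2 + rung ℝ i := by
  constructor <;>
  · rw [SimpleGraph.degree_eq_sum_if_adj, Fintype.sum_sum_type]
    simp only [adj_ll, adj_lr, adj_rl, adj_rr, ite_cycle, ite_rung, Finset.sum_add_distrib]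
    simp only [eq_succ_mod_iff i, eq_pred_mod_iff i]
    norm_num [add_comm]

lemma lapMatrix_eq (n : ℕ) : (cylinder n).lapMatrix ℝ =
    fromBlocks (cyclicJacobi (4 * n) fun i => 2 + rung ℝ i) (-diagonal fun i : Fin (4 * n) => rung ℝ i)
      (-diagonal fun i : Fin (4 * n) => rung ℝ i) (cyclicJacobi (4 * n) fun i => 2 + rung ℝ i) := by
  ext (i | i) (j | j)
  all_goals
    simp only [SimpleGraph.lapMatrix, SimpleGraph.degMatrix, Matrix.sub_apply, diagonal_apply,
      SimpleGraph.adjMatrix_apply, adj_ll, adj_lr, adj_rl, adj_rr, ite_cycle, ite_rung,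
      fromBlocks_apply₁₁, fromBlocks_apply₁₂, fromBlocks_apply₂₁, fromBlocks_apply₂₂, Matrix.neg_apply,
      cyclicJacobi, Sum.inl.injEq, Sum.inr.injEq, (degree_eq n _).1, (degree_eq n _).2, reduceCtorEq,
      if_false]
    ring

/-- The symmetric and antisymmetric vectors under `u ↔ v` factor the characteristic polynomial. The
signs of the factors disappear because the matrices have even size. -/
lemma charpoly_eq (n : ℕ) : ((cylinder n).lapMatrix ℝ).charpoly =
    (cyclicJacobi (4 * n) fun _ => (2 - X : ℝ[X])).det *
      (cyclicJacobi (4 * n) fun i => (2 + 2 * rung ℝ[X] i - X : ℝ[X])).det := by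
  have hr : ∀ i, C (rung ℝ i) = rung ℝ[X] i := by
    intro i; simp only [rung]; split_ifs <;> simp
  have h2 : (C 2 : ℝ[X]) = 2 := rfl
  have h : -charmatrix ((cylinder n).lapMatrix ℝ) =
      fromBlocks (cyclicJacobi (4 * n) fun i => 2 + rung ℝ[X] i - X) (-diagonal fun i : Fin (4 * n) => rung ℝ[X] i)
      (-diagonal fun i : Fin (4 * n) => rung ℝ[X] i) (cyclicJacobi (4 * n) fun i => 2 + rung ℝ[X] i - X) := by
    rw [lapMatrix_eq]
    ext1 (i | i) (j | j)
    all_goals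
      simp only [Matrix.neg_apply, charmatrix_apply, diagonal_apply, Sum.inl.injEq, Sum.inr.injEq,
        reduceCtorEq, if_false, fromBlocks_apply₁₁, fromBlocks_apply₁₂, fromBlocks_apply₂₁,
        fromBlocks_apply₂₂, cyclicJacobi, ← hr]
      split_ifs <;> simp [h2] <;> ring
  have hneg : (-charmatrix ((cylinder n).lapMatrix ℝ)).det = ((cylinder n).lapMatrix ℝ).charpoly := by
    rw [det_neg, charpoly, Even.neg_one_pow, one_mul]
    simp
  rw [← hneg, h, det_fromBlocks_swap]
  congr 2
  · ext1 i j
    simp only [cyclicJacobi, Matrix.add_apply, Matrix.neg_apply, diagonal_apply]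
    split_ifs <;> ring
  · ext1 i j
    simp only [cyclicJacobi, Matrix.sub_apply, Matrix.neg_apply, diagonal_apply]
    split_ifs <;> ring

/-! ### The product of the nonzero eigenvalues -/

/-- Comparison of the linear coefficients of the characteristic polynomial. -/
lemma prod_eq (n : ℕ) (hn : 1 ≤ n) (μs : Fin (8 * n) → ℝ) (i₀ : Fin (8 * n)) (hzero : μs i₀ = 0)
    (hchar : ((cylinder n).lapMatrix ℝ).charpoly = ∏ i : Fin (8 * n), (X - C (μs i))) :
    ∏ i ∈ Finset.univ.erase i₀, μs i = (4 * n : ℝ) ^ 2 * (mu ^ n + nu ^ n - 2) := by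
  set f : ℝ[X] := (cyclicJacobi (4 * n) fun _ => (2 - X : ℝ[X])).det with hf
  set g : ℝ[X] := (cyclicJacobi (4 * n) fun i => (2 + 2 * rung ℝ[X] i - X : ℝ[X])).det with hg
  have hf' : f = monodromyTrace (fun _ => (2 - X : ℝ[X])) (4 * n) - 2 := det_cyclicJacobi _ (by omega) _ rfl
  have hf0 : f.eval 0 = 0 := by
    rw [hf', eval_sub, (monodromyTrace_const _).1]; simp
  have hf1 : (derivative f).eval 0 = -(4 * n : ℝ) ^ 2 := by
    have : derivative (2 : ℝ[X]) = 0 := derivative_ofNat 2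
    rw [hf', derivative_sub, eval_sub, (monodromyTrace_const _).2, this]; simp
  have hg0 : g.eval 0 = mu ^ n + nu ^ n - 2 := by
    have e : g.eval 0 = (cyclicJacobi (4 * n) fun i => 2 + 2 * rung ℝ i).det := by
      rw [hg, ← coe_evalRingHom, RingHom.map_det]
      congr 1
      ext i j
      simp only [RingHom.mapMatrix_apply, map_apply, cyclicJacobi, rung, coe_evalRingHom]
      split_ifs <;> simp
    rw [e, det_cyclicJacobi _ (by omega) _ (by simp [rung]), monodromyTrace_rung _ (fun _ => rfl)]
  have hfg : f * g = X * ∏ i ∈ Finset.univ.erase i₀, (X - C (μs i)) := by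
    rw [← charpoly_eq, hchar, ← Finset.mul_prod_erase _ _ (Finset.mem_univ i₀), hzero]
    simp
  -- As `f` vanishes at `0`, only the derivative of `f` contributes to that of `f * g` at `0`.
  have hd := congrArg (fun p => (derivative p).eval 0) hfg
  simp only [derivative_mul, derivative_X, eval_add, eval_mul, hf0, hf1, hg0, eval_X,
    zero_mul, add_zero, one_mul, eval_prod, eval_sub, eval_C, zero_sub, Finset.prod_neg] at hd
  rw [Finset.card_erase_of_mem (Finset.mem_univ _), Finset.card_univ, Fintype.card_fin,
    Odd.neg_one_pow ⟨4 * n - 1, by omega⟩] at hd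
  linear_combination hd

end

theorem stmt_15 (n : ℕ) (hn : 1 ≤ n) (μs : Fin (8 * n) → ℝ)
    (hmono : Monotone μs)
    (hzero : μs ⟨0, by omega⟩ = 0)
    (hpos : ∀ i : Fin (8 * n), i ≠ ⟨0, by omega⟩ → 0 < μs i)
    (hchar : ((cylinder n).lapMatrix ℝ).charpoly
      = ∏ i : Fin (8 * n), (Polynomial.X - Polynomial.C (μs i))) :
    (1 / (8 * n : ℝ)) * ∏ i ∈ Finset.univ.erase (⟨0, by omega⟩ : Fin (8 * n)), μs i
      = 2 * n * (mu ^ n + nu ^ n - 2) := by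
  have h0 : (n : ℝ) ≠ 0 := by positivity
  rw [prod_eq n hn μs _ hzero hchar]
  field_simp
  ring
end

section
/- Let n ≥ 2 and let Q_n(8,4) be the Möbius octagonal-quadrilateral network: the simple graph on the 8n vertices u_1,…,u_{4n}, v_1,…,v_{4n} whose edges are u_i u_{i+1} and v_i v_{i+1} for 1 ≤ i ≤ 4n−1, u_i v_i for every i ≡ 0 or 1 (mod 4), and the two twisted edges u_1 v_{4n} and v_1 u_{4n}. Then the Wiener index of Q_n(8,4), i.e. the sum of the graph distances d(x,y) over all unordered pairs of distinct vertices {x,y}, equals 32n³ + 16n² + 4n. -/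
/-! ### Positions on the Hamiltonian cycle -/

/-- Position of a vertex on the Hamiltonian cycle `u_1, …, u_{4n}, v_1, …, v_{4n}` of length `8n`,
counted from `0`. -/
def mobiusPos (n : ℕ) : (Fin (4 * n) ⊕ Fin (4 * n)) → ℕ
  | Sum.inl i => i.val
  | Sum.inr i => 4 * n + i.val

/-- Distance between the positions `p` and `q` along the cycle of length `8n`. -/
def cycDist (n p q : ℕ) : ℕ := min (p - q + (q - p)) (8 * n - (p - q + (q - p)))

/-- `p` and `q` are both inner vertices (not on a rung) of the two opposite sides of the same
octagon. -/
def Facing (n p q : ℕ) : Prop :=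
  (p % 4 = 1 ∨ p % 4 = 2) ∧ (q % 4 = 1 ∨ q % 4 = 2) ∧ (p / 4 + n = q / 4 ∨ q / 4 + n = p / 4)

instance (n p q : ℕ) : Decidable (Facing n p q) := by unfold Facing; infer_instance

/-- The closed form of the graph distance in terms of positions. -/
def posDist (n p q : ℕ) : ℕ :=
  min (cycDist n p q) (4 * n + 1 - cycDist n p q) + if Facing n p q then 2 else 0

/-- Adjacency in terms of positions: neighbours on the cycle, or the two ends of a rung. -/
def PosAdj (n p q : ℕ) : Prop :=
  (q = p + 1 ∨ p = q + 1 ∨ (p = 0 ∧ q + 1 = 8 * n) ∨ (q = 0 ∧ p + 1 = 8 * n)) ∨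
    ((p % 4 = 0 ∨ p % 4 = 3) ∧ (q = p + 4 * n ∨ p = q + 4 * n))

theorem mobiusPos_lt (n : ℕ) (x : Fin (4 * n) ⊕ Fin (4 * n)) : mobiusPos n x < 8 * n := by
  rcases x with ⟨i, hi⟩ | ⟨i, hi⟩ <;> simp only [mobiusPos] <;> omega

theorem mobiusPos_inj (n : ℕ) (x y : Fin (4 * n) ⊕ Fin (4 * n))
    (h : mobiusPos n x = mobiusPos n y) : x = y := by
  rcases x with ⟨i, hi⟩ | ⟨i, hi⟩ <;> rcases y with ⟨j, hj⟩ | ⟨j, hj⟩ <;>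
    simp only [mobiusPos] at h <;> simp <;> omega

theorem exists_mobiusPos (n p : ℕ) (hp : p < 8 * n) : ∃ x, mobiusPos n x = p := by
  by_cases h : p < 4 * n
  · exact ⟨Sum.inl ⟨p, h⟩, rfl⟩
  · exact ⟨Sum.inr ⟨p - 4 * n, by omega⟩, by simp only [mobiusPos]; omega⟩

theorem mobius_adj (n : ℕ) (hn : 2 ≤ n) (x y : Fin (4 * n) ⊕ Fin (4 * n)) :
    (mobius n).Adj x y ↔ PosAdj n (mobiusPos n x) (mobiusPos n y) := by
  rcases x with ⟨i, hi⟩ | ⟨i, hi⟩ <;> rcases y with ⟨j, hj⟩ | ⟨j, hj⟩ <;>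
    simp [mobius, SimpleGraph.fromRel_adj, mobiusRel, mobiusPos, PosAdj] <;> omega

/-! ### The closed form changes by at most one along edges -/

/-- Positions adjacent on the cycle of length `8n`. -/
def CycAdj (n q r : ℕ) : Prop :=
  r = q + 1 ∨ q = r + 1 ∨ (q = 0 ∧ r + 1 = 8 * n) ∨ (r = 0 ∧ q + 1 = 8 * n)

theorem cycDist_le_of_cycAdj (n p q r : ℕ) (hp : p < 8 * n) (hq : q < 8 * n)
    (hr : r < 8 * n) (h : CycAdj n q r) : cycDist n p r ≤ cycDist n p q + 1 := by
  unfold CycAdj at h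
  unfold cycDist
  omega

theorem CycAdj.symm {n q r : ℕ} (h : CycAdj n q r) : CycAdj n r q := by
  unfold CycAdj at *
  omega

theorem cycDist_add_antipode (n p q r : ℕ) (hp : p < 8 * n) (hq : q < 8 * n)
    (hr : r < 8 * n) (h : r = q + 4 * n ∨ q = r + 4 * n) :
    cycDist n p q + cycDist n p r = 4 * n := by
  unfold cycDist
  omega

theorem Facing.le_cycDist {n p q : ℕ} (h : Facing n p q) : 4 * n ≤ cycDist n p q + 1 := by
  unfold Facing at h
  unfold cycDist
  omega

theorem cycDist_le (n p q : ℕ) : cycDist n p q ≤ 4 * n := by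
  unfold cycDist
  omega

/-- Leaving the side opposite to `p` through a rung vertex brings one closer to `p` on the
cycle. -/
theorem Facing.cycDist_eq {n p q r : ℕ} (hq : q < 8 * n)
    (hr : r < 8 * n) (h : CycAdj n q r) (hf : Facing n p q) (hg : ¬ Facing n p r) :
    cycDist n p q = cycDist n p r + 1 := by
  unfold CycAdj at h
  unfold Facing at *
  obtain ⟨h1, h2, h3⟩ := hf
  have h4 : ¬ (r % 4 = 1 ∨ r % 4 = 2) := by
    intro h5
    apply hg
    refine ⟨h1, h5, ?_⟩
    omega
  clear hg
  unfold cycDist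
  rcases h3 with h3 | h3 <;> rcases h1 with h1 | h1 <;> rcases h2 with h2 | h2 <;> omega

theorem posDist_of_facing {n p q : ℕ} (h : Facing n p q) :
    posDist n p q = min (cycDist n p q) (4 * n + 1 - cycDist n p q) + 2 := by
  rw [posDist, if_pos h]

theorem posDist_of_not_facing {n p q : ℕ} (h : ¬ Facing n p q) :
    posDist n p q = min (cycDist n p q) (4 * n + 1 - cycDist n p q) := by
  rw [posDist, if_neg h, add_zero]

/-- `posDist n p` changes by at most one along an edge. -/
theorem posDist_lipschitz (n : ℕ) (hn : 2 ≤ n) (p q r : ℕ) (hp : p < 8 * n) (hq : q < 8 * n)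
    (hr : r < 8 * n) (h : PosAdj n q r) : posDist n p r ≤ posDist n p q + 1 := by
  have hcq := cycDist_le n p q
  have hcr := cycDist_le n p r
  rcases h with h | ⟨h0, h⟩
  · have h1 := cycDist_le_of_cycAdj n p q r hp hq hr h
    have h2 := cycDist_le_of_cycAdj n p r q hp hr hq (CycAdj.symm h)
    by_cases hfq : Facing n p q <;> by_cases hfr : Facing n p r
    · rw [posDist_of_facing hfq, posDist_of_facing hfr]
      omega
    · rw [posDist_of_facing hfq, posDist_of_not_facing hfr]
      omega
    · have h3 := hfr.cycDist_eq hr hq (CycAdj.symm h) hfq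
      have h4 := hfr.le_cycDist
      rw [posDist_of_not_facing hfq, posDist_of_facing hfr]
      omega
    · rw [posDist_of_not_facing hfq, posDist_of_not_facing hfr]
      omega
  · have h1 := cycDist_add_antipode n p q r hp hq hr h
    have hfq : ¬ Facing n p q := fun hf => by have := hf.2.1; omega
    have hfr : ¬ Facing n p r := fun hf => by have := hf.2.1; omega
    rw [posDist_of_not_facing hfq, posDist_of_not_facing hfr]
    omega

/-! ### Descent towards the base point -/

/-- Every position other than `p` has a cycle neighbour closer to `p` on the cycle, and, unless
it is antipodal to `p`, also one farther from `p`. -/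
theorem exists_cycAdj (n p q : ℕ) (hp : p < 8 * n) (hq : q < 8 * n) (hpq : p ≠ q) :
    (∃ r < 8 * n, CycAdj n q r ∧ cycDist n p r + 1 = cycDist n p q) ∧
    (cycDist n p q < 4 * n → ∃ r < 8 * n, CycAdj n q r ∧ cycDist n p r = cycDist n p q + 1) := by
  obtain ⟨a, ha, hal⟩ : ∃ a, (q + 1 = a ∨ (a = 0 ∧ q + 1 = 8 * n)) ∧ a < 8 * n := by
    by_cases h : q + 1 = 8 * n
    · exact ⟨0, by omega, by omega⟩
    · exact ⟨q + 1, by omega, by omega⟩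
  obtain ⟨b, hb, hbl⟩ : ∃ b, (q = b + 1 ∨ (q = 0 ∧ b + 1 = 8 * n)) ∧ b < 8 * n := by
    by_cases h : q = 0
    · exact ⟨8 * n - 1, by omega, by omega⟩
    · exact ⟨q - 1, by omega, by omega⟩
  have hqa : CycAdj n q a := by unfold CycAdj; omega
  have hqb : CycAdj n q b := by unfold CycAdj; omega
  have key : (cycDist n p a + 1 = cycDist n p q ∨ cycDist n p b + 1 = cycDist n p q) ∧
      (cycDist n p q < 4 * n → cycDist n p a = cycDist n p q + 1 ∨
        cycDist n p b = cycDist n p q + 1) := by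
    clear hqa hqb
    unfold cycDist
    -- which of the two is closer depends on the side of `p` and of its antipode on which `q` lies
    rcases lt_or_gt_of_ne hpq with h | h
    · rcases le_or_gt q (p + 4 * n) with h' | h'
      · exact ⟨Or.inr (by omega), fun _ => Or.inl (by omega)⟩
      · exact ⟨Or.inl (by omega), fun _ => Or.inr (by omega)⟩
    · rcases le_or_gt p (q + 4 * n) with h' | h'
      · exact ⟨Or.inl (by omega), fun _ => Or.inr (by omega)⟩
      · exact ⟨Or.inr (by omega), fun _ => Or.inl (by omega)⟩
  refine ⟨?_, fun hlt => ?_⟩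
  · rcases key.1 with h | h
    exacts [⟨a, hal, hqa, h⟩, ⟨b, hbl, hqb, h⟩]
  · rcases key.2 hlt with h | h
    exacts [⟨a, hal, hqa, h⟩, ⟨b, hbl, hqb, h⟩]

/-- A position facing `p` has a cycle neighbour on a rung. -/
theorem Facing.exists_cycAdj_not {n p q : ℕ} (hq : q < 8 * n) (hf : Facing n p q) :
    ∃ r < 8 * n, CycAdj n q r ∧ ¬ Facing n p r := by
  rcases hf.2.1 with h | h
  · exact ⟨q - 1, by omega, by unfold CycAdj; omega, fun hg => by have := hg.2.1; omega⟩
  · exact ⟨q + 1, by omega, by unfold CycAdj; omega, fun hg => by have := hg.2.1; omega⟩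

/-- An inner position that does not face `p` has no neighbour on the cycle that does. -/
theorem not_facing_of_cycAdj {n p q r : ℕ} (hq : q < 8 * n) (hr : r < 8 * n)
    (h : CycAdj n q r) (h4 : ¬ (q % 4 = 0 ∨ q % 4 = 3)) (hf : ¬ Facing n p q) :
    ¬ Facing n p r := by
  rintro ⟨h1, h2, h3⟩
  unfold CycAdj at h
  exact hf ⟨h1, by omega, by omega⟩

/-- The only antipode of an inner position is a facing one. -/
theorem facing_of_antipodal {n p q : ℕ} (h4 : ¬ (q % 4 = 0 ∨ q % 4 = 3))
    (hc : cycDist n p q = 4 * n) (hn : 2 ≤ n) (hp : p < 8 * n) (hq : q < 8 * n) :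
    Facing n p q := by
  unfold cycDist at hc
  unfold Facing
  omega

/-- Every position other than `p` has a neighbour that is closer to `p`. -/
theorem posDist_descent (n : ℕ) (hn : 2 ≤ n) (p q : ℕ) (hp : p < 8 * n) (hq : q < 8 * n)
    (hpq : p ≠ q) : ∃ r < 8 * n, PosAdj n q r ∧ posDist n p r + 1 ≤ posDist n p q := by
  have hcq := cycDist_le n p q
  obtain ⟨⟨a, hal, hqa, ha⟩, hup⟩ := exists_cycAdj n p q hp hq hpq
  by_cases hf : Facing n p q
  · -- walk to the nearer end of the side
    obtain ⟨r, hr, hqr, hg⟩ := hf.exists_cycAdj_not hq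
    have h1 := hf.cycDist_eq hq hr hqr hg
    have h2 := hf.le_cycDist
    refine ⟨r, hr, Or.inl hqr, ?_⟩
    rw [posDist_of_facing hf, posDist_of_not_facing hg]
    omega
  by_cases hle : cycDist n p q ≤ 2 * n
  · have hg : ¬ Facing n p a := fun hg => by have := hg.le_cycDist; omega
    refine ⟨a, hal, Or.inl hqa, ?_⟩
    rw [posDist_of_not_facing hf, posDist_of_not_facing hg]
    omega
  by_cases h4 : q % 4 = 0 ∨ q % 4 = 3
  · -- cross the rung
    obtain ⟨c, hc, hcl⟩ : ∃ c, (c = q + 4 * n ∨ q = c + 4 * n) ∧ c < 8 * n := by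
      by_cases h : q < 4 * n
      · exact ⟨q + 4 * n, by omega, by omega⟩
      · exact ⟨q - 4 * n, by omega, by omega⟩
    have h1 := cycDist_add_antipode n p q c hp hq hcl hc
    have hg : ¬ Facing n p c := fun hg => by have := hg.2.1; omega
    refine ⟨c, hcl, Or.inr ⟨h4, hc⟩, ?_⟩
    rw [posDist_of_not_facing hf, posDist_of_not_facing hg]
    omega
  · -- walk towards the antipode of `p`, where a rung will be met
    have hlt : cycDist n p q < 4 * n := lt_of_le_of_ne hcq fun h =>
      hf (facing_of_antipodal h4 h hn hp hq)
    obtain ⟨r, hr, hqr, h1⟩ := hup hlt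
    have hg := not_facing_of_cycAdj hq hr hqr h4 hf
    refine ⟨r, hr, Or.inl hqr, ?_⟩
    rw [posDist_of_not_facing hf, posDist_of_not_facing hg]
    omega

/-! ### The graph distance -/

theorem posDist_self (n p : ℕ) (hn : 2 ≤ n) : posDist n p p = 0 := by
  have h : ¬ Facing n p p := by
    rintro ⟨h1, h2, h3⟩
    omega
  rw [posDist_of_not_facing h]
  unfold cycDist
  omega

/-- Following the descent of `posDist` yields a walk of at most that length. -/
theorem mobius_walk (n : ℕ) (hn : 2 ≤ n) (x : Fin (4 * n) ⊕ Fin (4 * n)) :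
    ∀ (k : ℕ) (y : Fin (4 * n) ⊕ Fin (4 * n)), posDist n (mobiusPos n x) (mobiusPos n y) ≤ k →
      ∃ w : (mobius n).Walk y x, w.length ≤ k := by
  intro k
  induction k with
  | zero =>
    intro y hy
    by_cases hxy : x = y
    · subst hxy; exact ⟨.nil, by simp⟩
    · obtain ⟨r, -, -, hr⟩ := posDist_descent n hn _ _ (mobiusPos_lt n x) (mobiusPos_lt n y)
        (fun h => hxy (mobiusPos_inj n _ _ h))
      omega
  | succ k ih =>
    intro y hy
    by_cases hxy : x = y
    · subst hxy; exact ⟨.nil, by simp⟩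
    · obtain ⟨r, hrl, hadj, hr⟩ := posDist_descent n hn _ _ (mobiusPos_lt n x) (mobiusPos_lt n y)
        (fun h => hxy (mobiusPos_inj n _ _ h))
      obtain ⟨z, rfl⟩ := exists_mobiusPos n r hrl
      obtain ⟨w, hw⟩ := ih z (by omega)
      exact ⟨.cons ((mobius_adj n hn y z).2 hadj) w, by simpa using hw⟩

/-- The Lipschitz bound, accumulated along a walk. -/
theorem posDist_le_walk (n : ℕ) (hn : 2 ≤ n) (x y z : Fin (4 * n) ⊕ Fin (4 * n))
    (w : (mobius n).Walk y z) : posDist n (mobiusPos n x) (mobiusPos n z) ≤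
      posDist n (mobiusPos n x) (mobiusPos n y) + w.length := by
  induction w with
  | nil => simp
  | @cons a b c h w ih =>
    have := posDist_lipschitz n hn _ _ _ (mobiusPos_lt n x) (mobiusPos_lt n a) (mobiusPos_lt n b)
      ((mobius_adj n hn a b).1 h)
    simp only [SimpleGraph.Walk.length_cons]
    omega

theorem mobius_dist (n : ℕ) (hn : 2 ≤ n) (x y : Fin (4 * n) ⊕ Fin (4 * n)) :
    (mobius n).dist x y = posDist n (mobiusPos n x) (mobiusPos n y) := by
  obtain ⟨w, hw⟩ := mobius_walk n hn x _ y le_rfl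
  apply le_antisymm
  · rw [SimpleGraph.dist_comm]
    exact (SimpleGraph.dist_le w).trans hw
  · obtain ⟨w', hw'⟩ := (w.reachable.symm).exists_walk_length_eq_dist
    have := posDist_le_walk n hn x x y w'
    rw [posDist_self _ _ hn] at this
    omega

/-! ### Summation -/

theorem sum_mobiusPos (n : ℕ) (f : ℕ → ℕ) :
    ∑ x, f (mobiusPos n x) = ∑ p ∈ Finset.range (8 * n), f p := by
  rw [Fintype.sum_sum_type, show 8 * n = 4 * n + 4 * n by ring, Finset.sum_range_add]
  simp only [mobiusPos]
  rw [Fin.sum_univ_eq_sum_range (fun i => f i), Fin.sum_univ_eq_sum_range (fun i => f (4 * n + i))]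

theorem sum_range_sub (m : ℕ) : 2 * ∑ j ∈ Finset.range m, (m - j) = m * (m + 1) := by
  induction m with
  | zero => simp
  | succ m ih =>
    rw [Finset.sum_range_succ']
    simp only [Nat.add_sub_add_right, Nat.sub_zero]
    linarith

theorem sum_range_id (m : ℕ) : 2 * ∑ j ∈ Finset.range (m + 1), j = m * (m + 1) := by
  induction m with
  | zero => simp
  | succ m ih =>
    rw [Finset.sum_range_succ]
    linarith

/-- The cyclic part of the distance sum, seen from position `0`. -/
theorem sum_cyc_zero (n : ℕ) (hn : 1 ≤ n) :
    (∑ d ∈ Finset.range (8 * n), min (cycDist n 0 d) (4 * n + 1 - cycDist n 0 d)) + 1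
      = 8 * n ^ 2 + 4 * n := by
  -- Between consecutive extrema at `0`, `2n`, `4n`, `6n`, `8n` the summand is linear.
  have hN : 8 * n = (2 * n + 1) + 2 * n + (2 * n - 1) + 2 * n := by omega
  rw [hN, Finset.sum_range_add, Finset.sum_range_add, Finset.sum_range_add]
  have e1 : ∑ d ∈ Finset.range (2 * n + 1), min (cycDist n 0 d) (4 * n + 1 - cycDist n 0 d)
      = ∑ d ∈ Finset.range (2 * n + 1), d := by
    refine Finset.sum_congr rfl fun d hd => ?_
    have := Finset.mem_range.1 hd
    unfold cycDist; omega
  have e2 : ∑ d ∈ Finset.range (2 * n), min (cycDist n 0 (2 * n + 1 + d))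
      (4 * n + 1 - cycDist n 0 (2 * n + 1 + d)) = ∑ d ∈ Finset.range (2 * n), (2 * n - d) := by
    refine Finset.sum_congr rfl fun d hd => ?_
    have := Finset.mem_range.1 hd
    unfold cycDist; omega
  have e3 : ∑ d ∈ Finset.range (2 * n - 1), min (cycDist n 0 (2 * n + 1 + 2 * n + d))
      (4 * n + 1 - cycDist n 0 (2 * n + 1 + 2 * n + d)) + 1
        = ∑ d ∈ Finset.range (2 * n + 1), d := by
    rw [show 2 * n + 1 = 2 + (2 * n - 1) by omega, Finset.sum_range_add _ 2]
    have : ∑ x ∈ Finset.range 2, x = 1 := by decide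
    rw [this, add_comm 1]
    congr 1
    refine Finset.sum_congr rfl fun d hd => ?_
    have := Finset.mem_range.1 hd
    unfold cycDist; omega
  have e4 : ∑ d ∈ Finset.range (2 * n), min (cycDist n 0 (2 * n + 1 + 2 * n + (2 * n - 1) + d))
      (4 * n + 1 - cycDist n 0 (2 * n + 1 + 2 * n + (2 * n - 1) + d))
        = ∑ d ∈ Finset.range (2 * n), (2 * n - d) := by
    refine Finset.sum_congr rfl fun d hd => ?_
    have := Finset.mem_range.1 hd
    unfold cycDist; omega
  have s1 := sum_range_sub (2 * n)
  have s2 := sum_range_id (2 * n)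
  rw [e1, e2, e4]
  nlinarith

/-- Rotation invariance: the cyclic part of the distance sum does not depend on the base point. -/
theorem sum_cyc (n p : ℕ) (hp : p < 8 * n) :
    ∑ q ∈ Finset.range (8 * n), min (cycDist n p q) (4 * n + 1 - cycDist n p q)
      = ∑ d ∈ Finset.range (8 * n), min (cycDist n 0 d) (4 * n + 1 - cycDist n 0 d) := by
  have h1 : Finset.range (8 * n) = Finset.range (p + (8 * n - p)) := by congr 1; omega
  have h2 : Finset.range (8 * n) = Finset.range ((8 * n - p) + p) := by congr 1; omega
  conv_lhs => rw [h1, Finset.sum_range_add]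
  conv_rhs => rw [h2, Finset.sum_range_add]
  rw [add_comm]
  congr 1
  · refine Finset.sum_congr rfl fun d hd => ?_
    have := Finset.mem_range.1 hd
    have e : cycDist n p (p + d) = cycDist n 0 d := by unfold cycDist; omega
    rw [e]
  · refine Finset.sum_congr rfl fun d hd => ?_
    have := Finset.mem_range.1 hd
    have e : cycDist n p d = cycDist n 0 (8 * n - p + d) := by unfold cycDist; omega
    rw [e]

/-- An inner vertex faces exactly two vertices, a vertex on a rung faces none. -/
theorem sum_facing (n p : ℕ) (hp : p < 8 * n) :
    ∑ q ∈ Finset.range (8 * n), (if Facing n p q then 2 else 0)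
      = if p % 4 = 1 ∨ p % 4 = 2 then 4 else 0 := by
  by_cases h : p % 4 = 1 ∨ p % 4 = 2
  · -- `a` is the first inner vertex of the side opposite to `p`
    obtain ⟨a, ha, ha4, hal⟩ : ∃ a, (p / 4 + n = a / 4 ∨ a / 4 + n = p / 4) ∧ a % 4 = 1 ∧
        a + 1 < 8 * n := by
      by_cases hlt : p < 4 * n
      · exact ⟨4 * (p / 4 + n) + 1, by omega, by omega, by omega⟩
      · exact ⟨4 * (p / 4 - n) + 1, by omega, by omega, by omega⟩
    rw [if_pos h]
    have e : ∀ q ∈ Finset.range (8 * n), (if Facing n p q then 2 else 0)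
        = (if q = a then 2 else 0) + (if q = a + 1 then 2 else 0) := by
      intro q hq
      have := Finset.mem_range.1 hq
      have hiff : Facing n p q ↔ q = a ∨ q = a + 1 := by
        unfold Facing
        omega
      simp only [hiff]
      split_ifs <;> omega
    rw [Finset.sum_congr rfl e, Finset.sum_add_distrib, Finset.sum_ite_eq', Finset.sum_ite_eq',
      if_pos (Finset.mem_range.2 (by omega)), if_pos (Finset.mem_range.2 (by omega))]
  · rw [if_neg h]
    exact Finset.sum_eq_zero fun q _ => if_neg fun hf => h hf.1

theorem sum_inner_positions (n : ℕ) :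
    ∑ p ∈ Finset.range (8 * n), (if p % 4 = 1 ∨ p % 4 = 2 then 4 else 0) = 16 * n := by
  induction n with
  | zero => simp
  | succ n ih =>
    rw [show 8 * (n + 1) = 8 * n + 8 by ring, Finset.sum_range_add, ih]
    have e : ∀ j, (8 * n + j) % 4 = j % 4 := fun j => by omega
    simp only [e]
    have : ∑ p ∈ Finset.range 8, (if p % 4 = 1 ∨ p % 4 = 2 then 4 else 0) = 16 := by decide
    rw [this]
    ring

theorem stmt_16 (n : ℕ) (hn : 2 ≤ n) :
    ∑ x : Fin (4 * n) ⊕ Fin (4 * n), ∑ y : Fin (4 * n) ⊕ Fin (4 * n), (mobius n).dist x y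
      = 2 * (32 * n ^ 3 + 16 * n ^ 2 + 4 * n) := by
  simp only [mobius_dist n hn]
  have h1 : ∀ x, ∑ y, posDist n (mobiusPos n x) (mobiusPos n y)
      = ∑ q ∈ Finset.range (8 * n), posDist n (mobiusPos n x) q :=
    fun x => sum_mobiusPos n (posDist n (mobiusPos n x))
  simp only [h1]
  rw [sum_mobiusPos n fun p => ∑ q ∈ Finset.range (8 * n), posDist n p q]
  have hz := sum_cyc_zero n (by omega)
  set S := ∑ d ∈ Finset.range (8 * n), min (cycDist n 0 d) (4 * n + 1 - cycDist n 0 d)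
  have h2 : ∀ p ∈ Finset.range (8 * n), ∑ q ∈ Finset.range (8 * n), posDist n p q
      = S + if p % 4 = 1 ∨ p % 4 = 2 then 4 else 0 := by
    intro p hp
    have hp := Finset.mem_range.1 hp
    simp only [posDist]
    rw [Finset.sum_add_distrib, sum_cyc n p hp, sum_facing n p hp]
  rw [Finset.sum_congr rfl h2, Finset.sum_add_distrib, sum_inner_positions]
  simp only [Finset.sum_const, Finset.card_range, smul_eq_mul]
  have h3 : 8 * n * (S + 1) = 8 * n * (8 * n ^ 2 + 4 * n) := by rw [hz]
  linarith
end
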